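/- arXiv:1111.5648 — 4 statements merged into one kernel-verified Lean document; each statement's English description precedes it below -/
import Mathlib

section
/- With probability at least 1 − δ over the i.i.d. draw of the sample D = (x_1,…,x_l) from P, every f ∈ F satisfies R(f) ≤ R(f,D,L) + c₁·√(V(F,D)/l) + c₂·√((1 − log₂ δ)/l), where L = (σ*(x_1),…,σ*(x_l)), c₁ = √(6/log₂ e) = √(6·ln 2) and c₂ = √(1/log₂ e) = √(ln 2). -/
open Classical Finset

/-- True risk of `f` as an approximation of the supervisor `σs`, with respect
to distribution `p` on `X`. -/
noncomputable def risk {X : Type*} [Fintype X] (p : X → ℝ) (σs f : X → Bool) : ℝ :=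
  ∑ x, (if f x ≠ σs x then (1 : ℝ) else 0) * p x

/-- Empirical risk of `f` on data `D` with labels `L`. -/
noncomputable def empRisk {X : Type*} {l : ℕ} (f : X → Bool)
    (D : Fin l → X) (L : Fin l → Bool) : ℝ :=
  (1 / l : ℝ) * ∑ i, if f (D i) ≠ L i then (1 : ℝ) else 0

/-- Empirical VC-entropy of `F` on `D`: `log₂` of the number of distinct
labelings of `D` realized by functions in `F`. -/
noncomputable def vcEntropy {X : Type*} {l : ℕ}
    (F : Finset (X → Bool)) (D : Fin l → X) : ℝ :=
  Real.logb 2 ((F.image (fun f => fun i => f (D i))).card)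

/-- centered loss -/
noncomputable def cl {X : Type*} [Fintype X] (p : X → ℝ) (σs f : X → Bool) (x : X) : ℝ :=
  risk p σs f - (if f x ≠ σs x then (1 : ℝ) else 0)

lemma cl_mgf {X : Type*} [Fintype X] (p : X → ℝ) (hp : ∀ x, 0 ≤ p x) (hp1 : ∑ x, p x = 1)
    (σs f : X → Bool) (t : ℝ) :
    ∑ x, p x * Real.exp (t * cl p σs f x) ≤ Real.exp (t ^ 2 / 8) := by
  let _ : MeasurableSpace X := ⊤
  have h1 : ∑ x, ENNReal.ofReal (p x) = 1 := by
    rw [← ENNReal.ofReal_sum_of_nonneg (fun x _ => hp x), hp1, ENNReal.ofReal_one]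
  let q : PMF X := PMF.ofFintype (fun x => ENNReal.ofReal (p x)) h1
  have hq : ∀ x, (q x).toReal = p x := by
    intro x
    simp [q, ENNReal.toReal_ofReal (hp x)]
  have hint : ∀ g : X → ℝ, ∫ x, g x ∂q.toMeasure = ∑ x, p x * g x := by
    intro g
    rw [PMF.integral_eq_sum]
    simp [hq]
  have hH := ProbabilityTheory.hasSubgaussianMGF_of_mem_Icc_of_integral_eq_zero (μ := q.toMeasure)
    (X := cl p σs f) (a := risk p σs f - 1) (b := risk p σs f)
    (measurable_from_top).aemeasurable (by
      refine Filter.Eventually.of_forall fun x => ?_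
      unfold cl
      split_ifs <;> simp) (by
      rw [hint]
      simp only [cl, mul_sub, Finset.sum_sub_distrib, ← Finset.sum_mul, hp1, risk]
      simp [mul_comm])
  have h2 := hH.mgf_le t
  rw [ProbabilityTheory.mgf, hint] at h2
  refine h2.trans (le_of_eq ?_)
  congr 1
  simp
  ring

lemma cond_mgf {X : Type*} [Fintype X] (p : X → ℝ) (hp : ∀ x, 0 ≤ p x) (hp1 : ∑ x, p x = 1)
    (σs : X → Bool) {l : ℕ} (s : ℕ) (φ : (Fin l → X) → (X → Bool))
    (hφ : ∀ D D' : Fin l → X, (∀ i, i.val < s → D i = D' i) → φ D = φ D') (t : ℝ) :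
    ∑ D : Fin l → X, (∏ i, p (D i)) *
      Real.exp (t * ∑ j : {i : Fin l // ¬ i.val < s}, cl p σs (φ D) (D j)) ≤
      Real.exp (Fintype.card {i : Fin l // ¬ i.val < s} * (t ^ 2 / 8)) := by
  have hX : Nonempty X := by
    by_contra h
    rw [not_nonempty_iff] at h
    simp at hp1
  obtain ⟨x0⟩ := hX
  let e := Equiv.piEquivPiSubtypeProd (fun i : Fin l => i.val < s) (fun _ => X)
  let ψ : ({i : Fin l // i.val < s} → X) → (X → Bool) := fun a => φ (e.symm (a, fun _ => x0))
  have hψ : ∀ a b, φ (e.symm (a, b)) = ψ a := by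
    intro a b
    apply hφ
    intro i hi
    simp [e, hi]
  rw [← e.symm.sum_comp, Fintype.sum_prod_type]
  calc _ = ∑ a : {i : Fin l // i.val < s} → X, (∏ i, p (a i)) *
        ∏ j : {i : Fin l // ¬ i.val < s}, ∑ x, p x * Real.exp (t * cl p σs (ψ a) x) := by
        refine Finset.sum_congr rfl fun a _ => ?_
        rw [Fintype.prod_sum, Finset.mul_sum]
        refine Finset.sum_congr rfl fun b _ => ?_
        rw [hψ, ← Fintype.prod_subtype_mul_prod_subtype (fun i : Fin l => i.val < s),
          Finset.mul_sum, Real.exp_sum, mul_assoc, Finset.prod_mul_distrib]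
        congr 1
        · refine Finset.prod_congr rfl fun i _ => ?_
          simp [e, i.2]
        · congr 1
          · refine Finset.prod_congr rfl fun i _ => ?_
            have := i.2
            simp [e, -not_lt, this]
          · refine Finset.prod_congr rfl fun i _ => ?_
            have := i.2
            simp [e, -not_lt, this]
    _ ≤ ∑ a : {i : Fin l // i.val < s} → X, (∏ i, p (a i)) *
        ∏ j : {i : Fin l // ¬ i.val < s}, Real.exp (t ^ 2 / 8) := by
        refine Finset.sum_le_sum fun a _ => ?_
        refine mul_le_mul_of_nonneg_left ?_ (Finset.prod_nonneg fun i _ => hp _)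
        refine Finset.prod_le_prod (fun i _ => ?_) fun i _ => cl_mgf p hp hp1 σs _ t
        exact Finset.sum_nonneg fun x _ => mul_nonneg (hp x) (Real.exp_pos _).le
    _ = _ := by
        rw [← Finset.sum_mul, ← Fintype.prod_sum (fun _ x => p x)]
        simp only [hp1, Finset.prod_const_one, one_mul, Finset.prod_const, Finset.card_univ]
        rw [← Real.exp_nat_mul]

lemma jensen_unnorm {α : Type*} (B : Finset α) (w Y : α → ℝ) 
    (hβ : 0 < ∑ a ∈ B, w a) (hw : ∀ a ∈ B, 0 ≤ w a) (C : ℝ)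
    (h : ∑ a ∈ B, w a * Real.exp (Y a) ≤ Real.exp C) :
    ∑ a ∈ B, w a * Y a ≤ (∑ a ∈ B, w a) * (C - Real.log (∑ a ∈ B, w a)) := by
  set β := ∑ a ∈ B, w a with hβd
  set c := C - Real.log β with hc
  have h1 : ∑ a ∈ B, w a * (Y a - c + 1) ≤ ∑ a ∈ B, w a * (Real.exp (Y a) * Real.exp (-c)) := by
    refine Finset.sum_le_sum fun a ha => mul_le_mul_of_nonneg_left ?_ (hw a ha)
    rw [← Real.exp_add]
    exact Real.add_one_le_exp _
  have h2 : ∑ a ∈ B, w a * (Real.exp (Y a) * Real.exp (-c)) ≤ β := by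
    simp only [← mul_assoc]
    rw [← Finset.sum_mul]
    calc _ ≤ Real.exp C * Real.exp (-c) := mul_le_mul_of_nonneg_right h (Real.exp_pos _).le
      _ = β := by
        rw [← Real.exp_add, hc]
        simp [Real.exp_log hβ]
  have h3 : ∑ a ∈ B, w a * (Y a - c + 1) = ∑ a ∈ B, w a * Y a - β * c + β := by
    simp only [mul_add, mul_sub, Finset.sum_add_distrib, Finset.sum_sub_distrib, mul_one,
      ← Finset.sum_mul, hβd]
  linarith

/-- argmax -/
lemma exists_pick {X : Type*} (F : Finset (X → Bool)) (hF : F.Nonempty) :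
    ∃ pick : ((X → Bool) → ℝ) → (X → Bool), ∀ v, pick v ∈ F ∧ ∀ f ∈ F, v f ≤ v (pick v) := by
  have : ∀ v : (X → Bool) → ℝ, ∃ g, g ∈ F ∧ ∀ f ∈ F, v f ≤ v g := by
    intro v
    obtain ⟨g, hg, h⟩ := F.exists_max_image v hF
    exact ⟨g, hg, h⟩
  choose pick h using this
  exact ⟨pick, h⟩

lemma massart_aux {s : ℕ} (G : Type*) (A : Finset G) (d : G → Fin s → ℝ)
    (hd : ∀ g i, |d g i| ≤ 1) (m : (Fin s → Bool) → G) (hm : ∀ τ, m τ ∈ A) (θ : ℝ) :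
    ∑ τ : Fin s → Bool, Real.exp (θ * ∑ i, (if τ i then -1 else 1) * d (m τ) i) ≤
      2 ^ s * (A.card * Real.exp (s * (θ ^ 2 / 2))) := by
  calc _ ≤ ∑ τ : Fin s → Bool, ∑ g ∈ A, Real.exp (θ * ∑ i, (if τ i then -1 else 1) * d g i) := by
        refine Finset.sum_le_sum fun τ _ => ?_
        exact Finset.single_le_sum (f := fun g => 
          Real.exp (θ * ∑ i, (if τ i then -1 else 1) * d g i))
          (fun g _ => (Real.exp_pos _).le) (hm τ)
    _ = ∑ g ∈ A, ∏ i : Fin s, ∑ b : Bool, Real.exp (θ * ((if b then -1 else 1) * d g i)) := by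
        rw [Finset.sum_comm]
        refine Finset.sum_congr rfl fun g _ => ?_
        rw [Fintype.prod_sum]
        refine Finset.sum_congr rfl fun τ _ => ?_
        rw [Finset.mul_sum, Real.exp_sum]
    _ ≤ ∑ g ∈ A, ∏ i : Fin s, (2 * Real.exp (θ ^ 2 / 2)) := by
        refine Finset.sum_le_sum fun g _ => Finset.prod_le_prod (fun i _ => by positivity) ?_
        intro i _
        have h1 := Real.cosh_le_exp_half_sq (θ * d g i)
        have h2 : (θ * d g i) ^ 2 / 2 ≤ θ ^ 2 / 2 := by
          have : (d g i) ^ 2 ≤ 1 := by rw [sq_le_one_iff_abs_le_one]; exact hd g i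
          rw [mul_pow]
          nlinarith [sq_nonneg θ]
        have h3 := Real.exp_le_exp.2 h2
        rw [Real.cosh_eq] at h1
        simp
        linarith
    _ = _ := by
        simp only [Finset.prod_const, Finset.card_univ, Fintype.card_fin, Finset.sum_const,
          nsmul_eq_mul, mul_pow]
        rw [← Real.exp_nat_mul]
        ring

lemma massart {s : ℕ} (hs : 0 < s) (G : Type*) (A : Finset G) (d : G → Fin s → ℝ)
    (hd : ∀ g i, |d g i| ≤ 1) (m : (Fin s → Bool) → G) (hm : ∀ τ, m τ ∈ A) :
    ∑ τ : Fin s → Bool, ∑ i, (if τ i then -1 else 1) * d (m τ) i ≤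
      2 ^ s * (s * Real.sqrt (2 * Real.log A.card / s)) := by
  have hA : (1:ℝ) ≤ A.card := by
    exact_mod_cast Finset.card_pos.2 ⟨_, hm (fun _ => true)⟩
  have hs' : (0:ℝ) < s := by exact_mod_cast hs
  set S := ∑ τ : Fin s → Bool, ∑ i, (if τ i then -1 else 1) * d (m τ) i with hS
  set V := Real.log A.card with hV
  have hV0 : 0 ≤ V := Real.log_nonneg hA
  have key : ∀ θ : ℝ, θ * S ≤ 2 ^ s * (V + s * (θ ^ 2 / 2)) := by
    intro θ
    have h := jensen_unnorm (Finset.univ : Finset (Fin s → Bool)) (fun _ => 1)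
      (fun τ => θ * ∑ i, (if τ i then -1 else 1) * d (m τ) i) (by simp) (by simp)
      (Real.log (2 ^ s) + V + s * (θ ^ 2 / 2)) (by
        rw [Real.exp_add, Real.exp_add, Real.exp_log (by positivity), hV,
          Real.exp_log (by linarith), mul_assoc]
        simpa using massart_aux G A d hd m hm θ)
    simp only [one_mul, ← Finset.mul_sum, Finset.sum_const, Finset.card_univ, nsmul_eq_mul,
      mul_one] at h
    rw [← hS] at h
    refine h.trans (le_of_eq ?_)
    simp
    ring
  have h2 : (0:ℝ) < 2 ^ s := by positivity
  rcases hV0.eq_or_lt with h0 | hpos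
  · rw [← h0]
    simp
    by_contra hc
    push Not at hc
    have := key (S / (2 ^ s * s))
    rw [← h0] at this
    have e1 : S / (2 ^ s * s) * S = S ^ 2 / (2 ^ s * s) := by ring
    have e2 : (2:ℝ) ^ s * (0 + s * ((S / (2 ^ s * s)) ^ 2 / 2)) = S ^ 2 / (2 ^ s * s) / 2 := by
      field_simp
      ring
    rw [e1, e2] at this
    have : 0 < S ^ 2 / (2 ^ s * s) := by positivity
    linarith
  · set r := Real.sqrt (2 * V / s) with hr
    have hr0 : 0 < r := Real.sqrt_pos.2 (by positivity)
    have hr2 : r ^ 2 = 2 * V / s := Real.sq_sqrt (by positivity)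
    have hV2 : V = s * r ^ 2 / 2 := by rw [hr2]; field_simp
    have := key r
    rw [hV2] at this
    have e : (2:ℝ) ^ s * (s * r ^ 2 / 2 + s * (r ^ 2 / 2)) = r * (2 ^ s * (s * r)) := by ring
    rw [e] at this
    exact le_of_mul_le_mul_left this hr0

lemma sum_perm {X : Type*} [Fintype X] {l : ℕ} (p : X → ℝ) (B : Finset (Fin l → X))
    (hB : ∀ (π : Equiv.Perm (Fin l)) (D : Fin l → X), D ∘ π ∈ B ↔ D ∈ B)
    (h : (Fin l → X) → ℝ) (π : Equiv.Perm (Fin l)) :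
    ∑ D ∈ B, (∏ i, p (D i)) * h (D ∘ π) = ∑ D ∈ B, (∏ i, p (D i)) * h D := by
  refine Finset.sum_equiv (π.symm.arrowCongr (Equiv.refl X)) ?_ ?_
  · intro D
    exact (hB π D).symm
  · intro D _
    have h1 : (π.symm.arrowCongr (Equiv.refl X)) D = D ∘ π := rfl
    rw [h1]
    congr 1
    exact (Equiv.prod_comp π (fun i => p (D i))).symm

/-- the swap map -/
def swf {l s : ℕ} (h2 : 2 * s ≤ l) (τ : Fin s → Bool) (i : Fin l) : Fin l :=
  if h : i.val < s then (if τ ⟨i, h⟩ then ⟨s + i, by omega⟩ else i)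
  else if h' : i.val < 2 * s then
    (if τ ⟨i - s, by omega⟩ then ⟨i - s, by omega⟩ else i)
  else i

lemma swf_left {l s : ℕ} (h2 : 2 * s ≤ l) (τ : Fin s → Bool) (i : Fin s) :
    swf h2 τ ⟨i, by omega⟩ = if τ i then ⟨s + i, by omega⟩ else ⟨i, by omega⟩ := by
  simp [swf]

lemma swf_right {l s : ℕ} (h2 : 2 * s ≤ l) (τ : Fin s → Bool) (i : Fin s) :
    swf h2 τ ⟨s + i, by omega⟩ = if τ i then ⟨i, by omega⟩ else ⟨s + i, by omega⟩ := by
  have : s + i.val < 2 * s := by omega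
  simp [swf, this]

lemma swf_invol {l s : ℕ} (h2 : 2 * s ≤ l) (τ : Fin s → Bool) :
    Function.Involutive (swf h2 τ) := by
  have hj1 : ∀ j : Fin s, j.val < l := fun j => by omega
  have hj2 : ∀ j : Fin s, s + j.val < l := fun j => by omega
  intro i
  by_cases h : i.val < s
  · obtain ⟨j, rfl⟩ : ∃ j : Fin s, i = ⟨j, hj1 j⟩ := ⟨⟨i.val, h⟩, rfl⟩
    rw [swf_left]
    by_cases hj : τ j
    · rw [if_pos hj, swf_right, if_pos hj]
    · rw [if_neg hj, swf_left, if_neg hj]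
  · by_cases h' : i.val < 2 * s
    · obtain ⟨j, rfl⟩ : ∃ j : Fin s, i = ⟨s + j, hj2 j⟩ :=
        ⟨⟨i.val - s, by omega⟩, by ext; simp; omega⟩
      rw [swf_right]
      by_cases hj : τ j
      · rw [if_pos hj, swf_left, if_pos hj]
      · rw [if_neg hj, swf_right, if_neg hj]
    · have : swf h2 τ i = i := by simp only [swf, dif_neg h, dif_neg h']
      rw [this, this]

lemma card_image_perm {X : Type*} {l : ℕ} (F : Finset (X → Bool)) (D : Fin l → X)
    (π : Equiv.Perm (Fin l)) :
    (F.image (fun f => fun i => f ((D ∘ π) i))).card = (F.image (fun f => fun i => f (D i))).card := by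
  have : F.image (fun f => fun i => f ((D ∘ π) i)) =
      (F.image (fun f => fun i => f (D i))).image (fun g => g ∘ π) := by
    rw [Finset.image_image]
    rfl
  rw [this]
  apply Finset.card_image_of_injective
  exact π.surjective.injective_comp_right

lemma swap_step {X : Type*} [Fintype X] (p : X → ℝ) (hp : ∀ x, 0 ≤ p x)
    (σs : X → Bool) {l s : ℕ} (hs : 0 < s) (h2 : 2 * s ≤ l)
    (F : Finset (X → Bool)) (B : Finset (Fin l → X))
    (hB : ∀ (π : Equiv.Perm (Fin l)) (D : Fin l → X), D ∘ π ∈ B ↔ D ∈ B)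
    (φ : (Fin l → X) → (X → Bool)) (hφF : ∀ D, φ D ∈ F) :
    ∑ D ∈ B, (∏ i, p (D i)) * (∑ i : Fin s,
      (cl p σs (φ D) (D ⟨i, by omega⟩) - cl p σs (φ D) (D ⟨s + i, by omega⟩))) ≤
    ∑ D ∈ B, (∏ i, p (D i)) *
      (s * Real.sqrt (2 * Real.log (F.image (fun f => fun i => f (D i))).card / s)) := by
  let π : (Fin s → Bool) → Equiv.Perm (Fin l) := fun τ => (swf_invol h2 τ).toPerm
  let H : (Fin l → X) → ℝ := fun D => ∑ i : Fin s,
      (cl p σs (φ D) (D ⟨i, by omega⟩) - cl p σs (φ D) (D ⟨s + i, by omega⟩))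
  have h1 : (2:ℝ) ^ s * ∑ D ∈ B, (∏ i, p (D i)) * H D =
      ∑ D ∈ B, (∏ i, p (D i)) * ∑ τ : Fin s → Bool, H (D ∘ π τ) := by
    simp only [Finset.mul_sum (s := (Finset.univ : Finset (Fin s → Bool)))]
    rw [Finset.sum_comm]
    simp only [sum_perm p B hB H]
    simp
  have h3 : ∀ D ∈ B, ∑ τ : Fin s → Bool, H (D ∘ π τ) ≤
      2 ^ s * (s * Real.sqrt (2 * Real.log (F.image (fun f => fun i => f (D i))).card / s)) := by
    intro D _
    let dd : (Fin l → Bool) → Fin s → ℝ := fun g i =>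
      (if g ⟨s + i, by omega⟩ ≠ σs (D ⟨s + i, by omega⟩) then (1:ℝ) else 0)
      - (if g ⟨i, by omega⟩ ≠ σs (D ⟨i, by omega⟩) then (1:ℝ) else 0)
    have := massart hs (Fin l → Bool) (F.image (fun f => fun i => f (D i))) dd
      (by
        intro g i
        simp only [dd]
        split_ifs <;> simp)
      (fun τ => fun i => φ (D ∘ π τ) (D i))
      (fun τ => Finset.mem_image.2 ⟨_, hφF _, rfl⟩)
    refine le_trans (le_of_eq ?_) this
    refine Finset.sum_congr rfl fun τ _ => Finset.sum_congr rfl fun i _ => ?_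
    have e1 : (D ∘ π τ) ⟨i, by omega⟩ = D (swf h2 τ ⟨i, by omega⟩) := rfl
    have e2 : (D ∘ π τ) ⟨s + i, by omega⟩ = D (swf h2 τ ⟨s + i, by omega⟩) := rfl
    rw [e1, e2, swf_left, swf_right]
    generalize φ (D ∘ π τ) = f
    simp only [dd, cl]
    by_cases h : τ i
    · simp only [h, if_true]; ring
    · simp only [h]; simp only [Bool.false_eq_true, if_false]; ring
  have h4 : (2:ℝ) ^ s * ∑ D ∈ B, (∏ i, p (D i)) * H D ≤ 2 ^ s * ∑ D ∈ B, (∏ i, p (D i)) *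
      (s * Real.sqrt (2 * Real.log (F.image (fun f => fun i => f (D i))).card / s)) := by
    rw [h1, Finset.mul_sum]
    refine Finset.sum_le_sum fun D hD => ?_
    have := mul_le_mul_of_nonneg_left (h3 D hD)
      (Finset.prod_nonneg (s := Finset.univ) fun i _ => hp (D i))
    linarith
  exact le_of_mul_le_mul_left h4 (by positivity)

lemma core {X : Type*} [Fintype X] (p : X → ℝ) (hp : ∀ x, 0 ≤ p x) (hp1 : ∑ x, p x = 1)
    (σs : X → Bool) {l s : ℕ} (hs : 0 < s) (h2 : 2 * s ≤ l) (h3 : l ≤ 3 * s)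
    (F : Finset (X → Bool)) (hF : F.Nonempty) (B : Finset (Fin l → X))
    (hB : ∀ (π : Equiv.Perm (Fin l)) (D : Fin l → X), D ∘ π ∈ B ↔ D ∈ B)
    (hβ : 0 < ∑ D ∈ B, ∏ i, p (D i)) (ε : ℝ)
    (hbad : ∀ D ∈ B, ∃ f ∈ F, l * (ε + Real.sqrt (6 *
      Real.log (F.image (fun f => fun i => f (D i))).card / l)) ≤ ∑ i, cl p σs f (D i))
    (t : ℝ) (ht : 0 < t) :
    t * (l - s : ℝ) * ε ≤ (l - s : ℝ) * (t ^ 2 / 8) - Real.log (∑ D ∈ B, ∏ i, p (D i)) := by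
  obtain ⟨pick, hpick⟩ := exists_pick F hF
  have hlz : NeZero l := ⟨by omega⟩
  have hl0 : (0:ℝ) < l := by exact_mod_cast (by omega : 0 < l)
  have hs0 : (0:ℝ) < s := by exact_mod_cast hs
  have hw : ∀ D : Fin l → X, 0 ≤ ∏ i, p (D i) := fun D => Finset.prod_nonneg fun i _ => hp _
  let φ : (Fin l → X) → (X → Bool) := fun D =>
    pick (fun f => ∑ i : Fin s, cl p σs f (D ⟨i, by omega⟩))
  have hφF : ∀ D, φ D ∈ F := fun D => (hpick _).1
  have hφ : ∀ D D' : Fin l → X, (∀ i, i.val < s → D i = D' i) → φ D = φ D' := by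
    intro D D' h
    simp only [φ]
    congr 1
    funext f
    refine Finset.sum_congr rfl fun i _ => ?_
    rw [h ⟨i, by omega⟩ i.2]
  let A : (Fin l → X) → ℝ := fun D => ∑ i : Fin s, cl p σs (φ D) (D ⟨i, by omega⟩)
  have hA : ∀ D, ∀ f ∈ F, ∑ i : Fin s, cl p σs f (D ⟨i, by omega⟩) ≤ A D := by
    intro D f hf
    exact (hpick (fun f => ∑ i : Fin s, cl p σs f (D ⟨i, by omega⟩))).2 f hf
  let V : (Fin l → X) → ℝ := fun D => Real.log (F.image (fun f => fun i => f (D i))).card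
  have hV0 : ∀ D, 0 ≤ V D := fun D => Real.log_natCast_nonneg _
  set β := ∑ D ∈ B, ∏ i, p (D i) with hβd
  -- step 1
  have s1 : ∀ D, ∀ f ∈ F, s * ∑ i, cl p σs f (D i) ≤ ∑ k : Fin l, A (D ∘ Equiv.addRight k) := by
    intro D f hf
    calc s * ∑ i, cl p σs f (D i) 
        = ∑ k : Fin l, ∑ i : Fin s, cl p σs f ((D ∘ Equiv.addRight k) ⟨i, by omega⟩) := by
          rw [Finset.sum_comm]
          have : ∀ i : Fin s, ∑ k : Fin l, cl p σs f ((D ∘ Equiv.addRight k) ⟨i, by omega⟩) =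
              ∑ i, cl p σs f (D i) := by
            intro i
            exact Equiv.sum_comp (Equiv.addLeft (⟨i, by omega⟩ : Fin l)) (fun j => cl p σs f (D j))
          rw [Finset.sum_congr rfl (fun i _ => this i)]
          simp
      _ ≤ _ := Finset.sum_le_sum fun k _ => hA _ f hf
  have s1' : s * ∑ D ∈ B, (∏ i, p (D i)) * (l * (ε + Real.sqrt (6 * V D / l))) ≤
      l * ∑ D ∈ B, (∏ i, p (D i)) * A D := by
    calc _ ≤ ∑ D ∈ B, (∏ i, p (D i)) * ∑ k : Fin l, A (D ∘ Equiv.addRight k) := by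
          rw [Finset.mul_sum]
          refine Finset.sum_le_sum fun D hD => ?_
          obtain ⟨f, hf, h⟩ := hbad D hD
          have h' := (mul_le_mul_of_nonneg_left h hs0.le).trans (s1 D f hf)
          have := mul_le_mul_of_nonneg_left h' (hw D)
          linarith
      _ = _ := by
          simp only [Finset.mul_sum (s := (Finset.univ : Finset (Fin l)))]
          rw [Finset.sum_comm]
          simp only [sum_perm p B hB A]
          simp
  -- step 2
  have s2 := jensen_unnorm B (fun D => ∏ i, p (D i))
    (fun D => t * ∑ j : {i : Fin l // ¬ i.val < s}, cl p σs (φ D) (D j)) hβ (fun D _ => hw D) _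
    ((Finset.sum_le_sum_of_subset_of_nonneg (Finset.subset_univ B)
      (fun D _ _ => mul_nonneg (hw D) (Real.exp_pos _).le)).trans
      (cond_mgf p hp hp1 σs s φ hφ t))
  have hcard : (Fintype.card {i : Fin l // ¬ i.val < s} : ℝ) = l - s := by
    rw [Fintype.card_subtype_compl]
    have : Fintype.card {i : Fin l // i.val < s} = s := by
      let e : {i : Fin l // i.val < s} ≃ Fin s :=
        ⟨fun i => ⟨i.1, i.2⟩, fun j => ⟨⟨j, by omega⟩, j.2⟩, fun _ => rfl, fun _ => rfl⟩
      rw [Fintype.card_congr e, Fintype.card_fin]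
    rw [this, Nat.cast_sub (by rw [Fintype.card_fin]; omega)]
    simp
  let j0 : Fin l := ⟨s, by omega⟩
  set a := ∑ D ∈ B, (∏ i, p (D i)) * cl p σs (φ D) (D j0) with ha
  have hj : ∀ j : Fin l, ¬ j.val < s → ∑ D ∈ B, (∏ i, p (D i)) * cl p σs (φ D) (D j) = a := by
    intro j hj
    rw [ha, ← sum_perm p B hB (fun D => cl p σs (φ D) (D j0)) (Equiv.swap j j0)]
    refine Finset.sum_congr rfl fun D _ => ?_
    have : φ (D ∘ Equiv.swap j j0) = φ D := by
      apply hφ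
      intro i hi
      rw [Function.comp, Equiv.swap_apply_of_ne_of_ne]
      · rintro rfl; exact hj hi
      · rintro rfl; simp [j0] at hi
    simp [this]
  have s2' : ∑ D ∈ B, (∏ i, p (D i)) *
      (t * ∑ j : {i : Fin l // ¬ i.val < s}, cl p σs (φ D) (D j)) = t * ((l - s) * a) := by
    have : ∀ D : Fin l → X, (∏ i, p (D i)) *
      (t * ∑ j : {i : Fin l // ¬ i.val < s}, cl p σs (φ D) (D j)) = 
        t * ∑ j : {i : Fin l // ¬ i.val < s}, (∏ i, p (D i)) * cl p σs (φ D) (D j) := by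
      intro D
      rw [← Finset.mul_sum]; ring
    simp only [this]
    rw [← Finset.mul_sum, Finset.sum_comm, Finset.sum_congr rfl (fun j _ => hj j.1 j.2)]
    rw [Finset.sum_const, Finset.card_univ, nsmul_eq_mul, hcard]
  rw [s2', hcard] at s2
  -- step 3
  have s3 := swap_step p hp σs hs h2 F B hB φ hφF
  have s3' : ∑ D ∈ B, (∏ i, p (D i)) * (∑ i : Fin s,
      (cl p σs (φ D) (D ⟨i, by omega⟩) - cl p σs (φ D) (D ⟨s + i, by omega⟩))) =
      ∑ D ∈ B, (∏ i, p (D i)) * A D - s * a := by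
    simp only [Finset.sum_sub_distrib, mul_sub]
    congr 1
    simp only [Finset.mul_sum]
    rw [Finset.sum_comm, Finset.sum_congr rfl (fun (i : Fin s) _ => hj ⟨s + i, by omega⟩ (by simp))]
    simp
  rw [s3'] at s3
  have s4 : ∑ D ∈ B, (∏ i, p (D i)) * (s * Real.sqrt (2 * V D / s)) ≤
      s * ∑ D ∈ B, (∏ i, p (D i)) * Real.sqrt (6 * V D / l) := by
    rw [Finset.mul_sum]
    refine Finset.sum_le_sum fun D _ => ?_
    have : Real.sqrt (2 * V D / s) ≤ Real.sqrt (6 * V D / l) := by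
      apply Real.sqrt_le_sqrt
      rw [div_le_div_iff₀ hs0 hl0]
      have : (l:ℝ) ≤ 3 * s := by exact_mod_cast h3
      nlinarith [hV0 D]
    have := mul_le_mul_of_nonneg_left this (mul_nonneg hs0.le (hw D))
    linarith
  have s5 : ∑ D ∈ B, (∏ i, p (D i)) * (l * (ε + Real.sqrt (6 * V D / l))) =
      l * (β * ε + ∑ D ∈ B, (∏ i, p (D i)) * Real.sqrt (6 * V D / l)) := by
    rw [hβd, Finset.sum_mul, ← Finset.sum_add_distrib, Finset.mul_sum]
    refine Finset.sum_congr rfl fun D _ => by ring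
  rw [s5] at s1'
  have s3b : ∑ D ∈ B, (∏ i, p (D i)) * A D - s * a ≤
    s * ∑ D ∈ B, (∏ i, p (D i)) * Real.sqrt (6 * V D / l) := le_trans s3 s4
  have s6 : β * ε ≤ a := by
    have h := mul_le_mul_of_nonneg_left s3b hl0.le
    have : (s * l : ℝ) * (β * ε) ≤ (s * l) * a := by nlinarith
    exact le_of_mul_le_mul_left this (by positivity)
  have hls : (0:ℝ) < l - s := by
    have : (s:ℝ) < l := by exact_mod_cast (by omega : s < l)
    linarith
  have s7 := mul_le_mul_of_nonneg_left s6 (mul_pos ht hls).le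
  have : β * (t * (l - s : ℝ) * ε) ≤ β * ((l - s : ℝ) * (t ^ 2 / 8) - Real.log β) := by
    calc _ = t * (l - s : ℝ) * (β * ε) := by ring
      _ ≤ t * (l - s : ℝ) * a := s7
      _ = t * ((l - s) * a) := by ring
      _ ≤ _ := s2
  exact le_of_mul_le_mul_left this hβ

lemma sum_cl {X : Type*} [Fintype X] (p : X → ℝ) (σs f : X → Bool) {l : ℕ} (hl : 1 ≤ l)
    (D : Fin l → X) :
    ∑ i, cl p σs f (D i) = l * (risk p σs f - empRisk f D (fun i => σs (D i))) := by
  have hl0 : (l:ℝ) ≠ 0 := by exact_mod_cast (by omega : l ≠ 0)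
  simp only [cl, empRisk, Finset.sum_sub_distrib, Finset.sum_const, Finset.card_univ,
    Fintype.card_fin, nsmul_eq_mul, mul_sub, ← mul_assoc]
  rw [mul_one_div_cancel hl0, one_mul]

lemma card_one_agree {X : Type*} {l : ℕ} (F : Finset (X → Bool)) (D : Fin l → X)
    (h : (F.image (fun f => fun i => f (D i))).card ≤ 1) (f g : X → Bool) (hf : f ∈ F)
    (hg : g ∈ F) (i : Fin l) : f (D i) = g (D i) := by
  have := Finset.card_le_one.1 h _ (Finset.mem_image_of_mem _ hf) _ (Finset.mem_image_of_mem _ hg)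
  exact congrFun this i

lemma risk_le_one {X : Type*} [Fintype X] (p : X → ℝ) (hp : ∀ x, 0 ≤ p x) (hp1 : ∑ x, p x = 1)
    (σs f : X → Bool) : risk p σs f ≤ 1 := by
  rw [← hp1, risk]
  refine Finset.sum_le_sum fun x _ => ?_
  split_ifs <;> simp [hp x]

/-- failure event -/
noncomputable def badSet {X : Type*} [Fintype X] (p : X → ℝ) (σs : X → Bool) (l : ℕ)
    (F : Finset (X → Bool)) (ε : ℝ) : Finset (Fin l → X) :=
  Finset.univ.filter (fun D => ∃ f ∈ F, empRisk f D (fun i => σs (D i)) + Real.sqrt (6 *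
      Real.log (F.image (fun f => fun i => f (D i))).card / l) + ε < risk p σs f)

lemma case_one {X : Type*} [Fintype X] (p : X → ℝ) (hp : ∀ x, 0 ≤ p x) (hp1 : ∑ x, p x = 1)
    (σs : X → Bool) (F : Finset (X → Bool)) (ε : ℝ) (hε : 0 < ε) :
    ∑ D ∈ badSet p σs 1 F ε, ∏ i, p (D i) ≤ 2 * Real.exp (-ε ^ 2) := by
  rcases (badSet p σs 1 F ε).eq_empty_or_nonempty with h | ⟨D0, hD0⟩
  · rw [h, Finset.sum_empty]; positivity
  have key : ∀ D ∈ badSet p σs 1 F ε, 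
      (F.image (fun f => fun i => f (D i))).card ≤ 1 ∧ 
      ∃ f ∈ F, f (D 0) = σs (D 0) ∧ ε < risk p σs f := by
    intro D hD
    simp only [badSet, Finset.mem_filter, Finset.mem_univ, true_and] at hD
    obtain ⟨f, hf, h⟩ := hD
    have hr := risk_le_one p hp hp1 σs f
    have hs0 := Real.sqrt_nonneg (6 *
      Real.log (F.image (fun f => fun i => f (D i))).card / (1:ℕ))
    have he : empRisk f D (fun i => σs (D i)) = if f (D 0) ≠ σs (D 0) then (1:ℝ) else 0 := by
      simp [empRisk]
    have he0 : f (D 0) = σs (D 0) := by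
      by_contra hc
      rw [he, if_pos hc] at h
      linarith
    rw [he, if_neg (not_not.2 he0)] at h
    refine ⟨?_, f, hf, he0, by linarith⟩
    by_contra hc
    push Not at hc
    have h2 : (2:ℝ) ≤ (F.image (fun f => fun i => f (D i))).card := by exact_mod_cast hc
    have h3 := Real.log_le_log (by norm_num) h2
    have h4 := Real.log_two_gt_d9
    have h5 : (1:ℝ) ≤ Real.sqrt (6 *
      Real.log (F.image (fun f => fun i => f (D i))).card / (1:ℕ)) := by
      apply Real.one_le_sqrt.2
      simp only [Nat.cast_one, div_one]
      linarith
    linarith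
  obtain ⟨_, f0, hf0, -, hr⟩ := key D0 hD0
  have hagree : ∀ D ∈ badSet p σs 1 F ε, f0 (D 0) = σs (D 0) := by
    intro D hD
    obtain ⟨h1, f, hf, h, _⟩ := key D hD
    rw [← h]
    exact card_one_agree F D h1 _ _ hf0 hf 0
  have hle : ∑ D ∈ badSet p σs 1 F ε, ∏ i, p (D i) ≤
      ∑ D : Fin 1 → X, (1 - (if f0 (D 0) ≠ σs (D 0) then (1:ℝ) else 0)) * p (D 0) := by
    calc _ = ∑ D ∈ badSet p σs 1 F ε,
          (1 - (if f0 (D 0) ≠ σs (D 0) then (1:ℝ) else 0)) * p (D 0) := by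
          refine Finset.sum_congr rfl fun D hD => ?_
          simp [hagree D hD]
      _ ≤ _ := by
          refine Finset.sum_le_sum_of_subset_of_nonneg (Finset.subset_univ _) ?_
          intro D _ _
          refine mul_nonneg ?_ (hp _)
          split_ifs <;> simp
  have heq : ∑ D : Fin 1 → X, (1 - (if f0 (D 0) ≠ σs (D 0) then (1:ℝ) else 0)) * p (D 0) =
      1 - risk p σs f0 := by
    have h := Equiv.sum_comp (Equiv.funUnique (Fin 1) X)
      (fun x => (1 - (if f0 x ≠ σs x then (1:ℝ) else 0)) * p x)
    refine Eq.trans h ?_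
    simp only [sub_mul, one_mul, Finset.sum_sub_distrib, hp1, risk]
  have h1 := risk_le_one p hp hp1 σs f0
  have h2 := Real.add_one_le_exp (-ε ^ 2)
  nlinarith

lemma bad_le {X : Type*} [Fintype X] (p : X → ℝ) (hp : ∀ x, 0 ≤ p x) (hp1 : ∑ x, p x = 1)
    (σs : X → Bool) {l : ℕ} (hl : 1 ≤ l) (F : Finset (X → Bool)) (hF : F.Nonempty)
    (ε : ℝ) (hε : 0 < ε) :
    ∑ D ∈ badSet p σs l F ε, ∏ i, p (D i) ≤ 2 * Real.exp (-(l * ε ^ 2)) := by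
  rcases hl.eq_or_lt with h1 | h1
  · subst h1
    have := case_one p hp hp1 σs F ε hε
    simpa using this
  set β := ∑ D ∈ badSet p σs l F ε, ∏ i, p (D i) with hβ
  rcases le_or_gt β 0 with h0 | h0
  · exact h0.trans (by positivity)
  have hl0 : (0:ℝ) < l := by exact_mod_cast (by omega : 0 < l)
  have hc := core p hp hp1 σs (l := l) (s := l / 2) (by omega) (by omega) (by omega) F hF
    (badSet p σs l F ε) (by
      intro π D
      simp only [badSet, Finset.mem_filter, Finset.mem_univ, true_and, card_image_perm]
      have : ∀ f : X → Bool, empRisk f (D ∘ π) (fun i => σs ((D ∘ π) i)) =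
          empRisk f D (fun i => σs (D i)) := by
        intro f
        simp only [empRisk]
        congr 1
        exact Equiv.sum_comp π (fun i => if f (D i) ≠ σs (D i) then (1:ℝ) else 0)
      simp only [this]) h0 ε (by
      intro D hD
      simp only [badSet, Finset.mem_filter, Finset.mem_univ, true_and] at hD
      obtain ⟨f, hf, h⟩ := hD
      refine ⟨f, hf, ?_⟩
      rw [sum_cl p σs f hl]
      exact mul_le_mul_of_nonneg_left (by linarith) hl0.le) (4 * ε) (by positivity)
  rw [← hβ] at hc
  have hT : (l:ℝ) / 2 ≤ (l:ℝ) - (l / 2 : ℕ) := by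
    have : (2:ℝ) * (l / 2 : ℕ) ≤ l := by exact_mod_cast (by omega : 2 * (l / 2) ≤ l)
    linarith
  have hlog : Real.log β ≤ -(l * ε ^ 2) := by nlinarith [mul_le_mul_of_nonneg_right hT (sq_nonneg ε)]
  have := Real.exp_le_exp.2 hlog
  rw [Real.exp_log h0] at this
  have := Real.exp_pos (-(l * ε ^ 2))
  linarith

/-- Empirical VC-entropy bound: with probability at least `1 - δ` over the
i.i.d. draw of `D` from `p`, every `f ∈ F` satisfies
`R(f) ≤ R(f,D,L) + c₁√(V(F,D)/l) + c₂√((1 - log₂ δ)/l)`,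
with `c₁ = √(6 ln 2)` and `c₂ = √(ln 2)`. -/
theorem empirical_vc_entropy_bound
    {X : Type*} [Fintype X] [Nonempty X]
    (p : X → ℝ) (hp : ∀ x, 0 ≤ p x) (hp1 : ∑ x, p x = 1)
    (σs : X → Bool) {l : ℕ} (hl : 1 ≤ l)
    (F : Finset (X → Bool)) (hF : F.Nonempty)
    (δ : ℝ) (hδ0 : 0 < δ) (hδ1 : δ < 1) :
    1 - δ ≤ ∑ D : Fin l → X,
      if ∀ f ∈ F,
          risk p σs f ≤ empRisk f D (fun i => σs (D i))
            + Real.sqrt (6 * Real.log 2) * Real.sqrt (vcEntropy F D / l)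
            + Real.sqrt (Real.log 2) * Real.sqrt ((1 - Real.logb 2 δ) / l)
        then ∏ i, p (D i) else 0 := by
  have hl0 : (0:ℝ) < l := by exact_mod_cast (by omega : 0 < l)
  have hlog2 : 0 < Real.log 2 := Real.log_pos (by norm_num)
  have hlogδ : Real.log δ < 0 := Real.log_neg hδ0 hδ1
  set ε := Real.sqrt (Real.log 2) * Real.sqrt ((1 - Real.logb 2 δ) / l) with hε
  have hε' : ε = Real.sqrt ((Real.log 2 - Real.log δ) / l) := by
    rw [hε, ← Real.sqrt_mul hlog2.le, Real.logb]
    congr 1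
    field_simp
  have hε0 : 0 < ε := by
    rw [hε']
    exact Real.sqrt_pos.2 (div_pos (by linarith) hl0)
  have hε2 : l * ε ^ 2 = Real.log 2 - Real.log δ := by
    rw [hε', Real.sq_sqrt (div_pos (by linarith) hl0).le]
    field_simp
  have hV : ∀ D : Fin l → X, Real.sqrt (6 * Real.log 2) * Real.sqrt (vcEntropy F D / l) =
      Real.sqrt (6 * Real.log (F.image (fun f => fun i => f (D i))).card / l) := by
    intro D
    rw [← Real.sqrt_mul (by positivity), vcEntropy, Real.logb]
    congr 1
    field_simp
  have hb := bad_le p hp hp1 σs hl F hF ε hε0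
  rw [hε2, neg_sub, Real.exp_sub, Real.exp_log hδ0, Real.exp_log (by norm_num)] at hb
  have htot : ∑ D : Fin l → X, ∏ i, p (D i) = 1 := by
    rw [← Fintype.prod_sum (fun _ x => p x)]
    simp [hp1]
  have hsplit : ∑ D : Fin l → X, ∏ i, p (D i) = (∑ D : Fin l → X,
      if ∀ f ∈ F,
          risk p σs f ≤ empRisk f D (fun i => σs (D i))
            + Real.sqrt (6 * Real.log 2) * Real.sqrt (vcEntropy F D / l)
            + ε
        then ∏ i, p (D i) else 0) + ∑ D ∈ badSet p σs l F ε, ∏ i, p (D i) := by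
    rw [badSet, Finset.sum_filter, ← Finset.sum_add_distrib]
    refine Finset.sum_congr rfl fun D _ => ?_
    rw [hV]
    by_cases h : ∀ f ∈ F, risk p σs f ≤ empRisk f D (fun i => σs (D i)) +
      Real.sqrt (6 * Real.log (F.image (fun f => fun i => f (D i))).card / l) + ε
    · rw [if_pos h, if_neg (by push Not; exact h), add_zero]
    · rw [if_neg h, if_pos (by push Not at h; exact h), zero_add]
  have : 2 * (δ / 2) = δ := by ring
  linarith
end

section
/- For every δ > 0, with probability at least 1 − δ over the i.i.d. draw of the sample D = (x_1,…,x_l) from P, every f ∈ F satisfies R(f) ≤ R(f,D,L) + 𝓡(F,D) + c₃·√((1 − log₂ δ)/l), where L = (σ*(x_1),…,σ*(x_l)) and c₃ = √(2/log₂ e) = √(2·ln 2). -/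
open Classical Finset

/-- The elements of `Y = {-1,+1}` viewed as real numbers: `true ↦ +1`, `false ↦ -1`. -/
noncomputable def val (b : Bool) : ℝ := if b then 1 else -1

/-- Empirical Rademacher complexity of `F` on `D`. -/
noncomputable def rademacher {X : Type*} [Fintype X] {l : ℕ}
    (F : Finset (X → Bool)) (hF : F.Nonempty) (D : Fin l → X) : ℝ :=
  (1 / (Fintype.card (X → Bool)) : ℝ) * ∑ σ : X → Bool,
    F.sup' hF (fun f => (1 / l : ℝ) * ∑ i, val (σ (D i)) * val (f (D i)))


section helpers
set_option linter.unusedSectionVars false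
variable {X : Type*} [Fintype X]

noncomputable def supF (F : Finset (X → Bool)) (hF : F.Nonempty) (u : X → ℝ) : ℝ :=
  F.sup' hF (fun f => ∑ x, u x * val (f x))

noncomputable def radH (F : Finset (X → Bool)) (hF : F.Nonempty) (u : X → ℝ) : ℝ :=
  ∑ σ : X → Bool, supF F hF (fun x => val (σ x) * u x)

noncomputable def push {l : ℕ} (D : Fin l → X) (e : Fin l → ℝ) (x : X) : ℝ :=
  ∑ i, if D i = x then e i else 0

noncomputable def expE (p : X → ℝ) (n : ℕ) (g : (Fin n → X) → ℝ) : ℝ :=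
  ∑ D : Fin n → X, (∏ i, p (D i)) * g D

lemma val_beq (a b : Bool) : val (a == b) = val a * val b := by
  cases a <;> cases b <;> simp [_root_.val]

lemma val_not (a : Bool) : val (!a) = - val a := by
  cases a <;> simp [_root_.val]

lemma abs_val (a : Bool) : |val a| = 1 := by
  cases a <;> simp [_root_.val]

lemma val_sq (a : Bool) : val a * val a = 1 := by
  cases a <;> simp [_root_.val]

lemma push_sum {l : ℕ} (D : Fin l → X) (e : Fin l → ℝ) (h : X → ℝ) :
    ∑ x, push D e x * h x = ∑ i, e i * h (D i) := by
  simp only [push, Finset.sum_mul]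
  rw [Finset.sum_comm]
  simp

lemma supF_le_iff (F : Finset (X → Bool)) (hF : F.Nonempty) (u : X → ℝ) (a : ℝ) :
    supF F hF u ≤ a ↔ ∀ f ∈ F, ∑ x, u x * val (f x) ≤ a := by
  simp [supF]

lemma le_supF (F : Finset (X → Bool)) (hF : F.Nonempty) (u : X → ℝ) {f : X → Bool} (hf : f ∈ F) :
    ∑ x, u x * val (f x) ≤ supF F hF u :=
  Finset.le_sup' (fun f : X → Bool => ∑ x, u x * val (f x)) hf

/-- Jensen -/
lemma supF_sum {ι : Type*} (F : Finset (X → Bool)) (hF : F.Nonempty) (s : Finset ι)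
    (w : ι → ℝ) (hw : ∀ i ∈ s, 0 ≤ w i) (u : ι → X → ℝ) :
    supF F hF (fun x => ∑ i ∈ s, w i * u i x) ≤ ∑ i ∈ s, w i * supF F hF (u i) := by
  rw [supF_le_iff]
  intro f hf
  calc ∑ x, (∑ i ∈ s, w i * u i x) * val (f x) = ∑ i ∈ s, w i * ∑ x, u i x * val (f x) := by
        simp only [Finset.sum_mul, Finset.mul_sum]
        rw [Finset.sum_comm]
        simp only [mul_assoc]
    _ ≤ _ := Finset.sum_le_sum fun i hi =>
        mul_le_mul_of_nonneg_left (le_supF F hF (u i) hf) (hw i hi)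

lemma supF_comb (F : Finset (X → Bool)) (hF : F.Nonempty) (a b : ℝ) (ha : 0 ≤ a) (hb : 0 ≤ b)
    (u v : X → ℝ) :
    supF F hF (fun x => a * u x + b * v x) ≤ a * supF F hF u + b * supF F hF v := by
  have := supF_sum F hF Finset.univ ![a, b] (by intro i _; fin_cases i <;> simpa) ![u, v]
  simpa using this

lemma supF_mul (F : Finset (X → Bool)) (hF : F.Nonempty) (a : ℝ) (ha : 0 ≤ a) (u : X → ℝ) :
    supF F hF (fun x => a * u x) = a * supF F hF u := by
  unfold supF
  rw [Finset.mul₀_sup' ha]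
  simp only [Finset.mul_sum, mul_assoc]

lemma supF_le_add (F : Finset (X → Bool)) (hF : F.Nonempty) (u v : X → ℝ) :
    supF F hF u ≤ supF F hF v + ∑ x, |u x - v x| := by
  rw [supF_le_iff]
  intro f hf
  have h1 := le_supF F hF v hf
  have h2 : ∑ x, (u x - v x) * val (f x) ≤ ∑ x, |u x - v x| := by
    refine Finset.sum_le_sum fun x _ => ?_
    refine (le_abs_self _).trans ?_
    rw [abs_mul, abs_val, mul_one]
  have h3 : ∑ x, (u x - v x) * val (f x) = ∑ x, u x * val (f x) - ∑ x, v x * val (f x) := by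
    rw [← Finset.sum_sub_distrib]; simp only [sub_mul]
  linarith

lemma radH_flip (F : Finset (X → Bool)) (hF : F.Nonempty) (c : X → Bool) (u : X → ℝ) :
    radH F hF (fun x => val (c x) * u x) = radH F hF u := by
  unfold radH
  have hinv : Function.Involutive (fun (σ : X → Bool) (x : X) => (σ x == c x)) := by
    intro σ; funext x; simp only; cases σ x <;> cases c x <;> rfl
  refine Fintype.sum_equiv hinv.toPerm _ _ ?_
  intro σ
  congr 1
  funext x
  simp only [Function.Involutive.coe_toPerm, val_beq]
  ring

lemma radH_comb (F : Finset (X → Bool)) (hF : F.Nonempty) (a b : ℝ) (ha : 0 ≤ a) (hb : 0 ≤ b)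
    (u v : X → ℝ) :
    radH F hF (fun x => a * u x + b * v x) ≤ a * radH F hF u + b * radH F hF v := by
  unfold radH
  rw [Finset.mul_sum, Finset.mul_sum, ← Finset.sum_add_distrib]
  refine Finset.sum_le_sum fun σ _ => ?_
  have := supF_comb F hF a b ha hb (fun x => val (σ x) * u x) (fun x => val (σ x) * v x)
  refine le_trans (le_of_eq ?_) this
  congr 1; funext x; ring

lemma radH_update (F : Finset (X → Bool)) (hF : F.Nonempty) (u : X → ℝ) (y : X) (c : ℝ)
    (hc : |c| ≤ u y) : radH F hF (Function.update u y c) ≤ radH F hF u := by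
  rcases eq_or_lt_of_le ((abs_nonneg c).trans hc) with h0 | h0
  · have : c = u y := by
      rw [← h0] at hc ⊢
      exact abs_nonpos_iff.mp hc
    rw [this, Function.update_eq_self]
  · obtain ⟨h1, h2⟩ := abs_le.mp hc
    have ha : 0 ≤ (1 + c / u y) / 2 := by
      have : -1 ≤ c / u y := by rw [le_div_iff₀ h0]; linarith
      linarith
    have hb : 0 ≤ (1 - c / u y) / 2 := by
      have : c / u y ≤ 1 := by rw [div_le_iff₀ h0]; linarith
      linarith
    have h := radH_comb F hF _ _ ha hb u (fun x => val (decide (x ≠ y)) * u x)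
    rw [radH_flip F hF (fun x => decide (x ≠ y)) u] at h
    have e : (fun x => (1 + c / u y) / 2 * u x + (1 - c / u y) / 2 *
        (val (decide (x ≠ y)) * u x)) = Function.update u y c := by
      funext x
      by_cases hx : x = y
      · subst hx; simp [_root_.val]; field_simp; ring
      · simp [_root_.val, hx]; ring
    rw [e] at h
    linarith

lemma radH_mono (F : Finset (X → Bool)) (hF : F.Nonempty) (u v : X → ℝ)
    (h : ∀ x, |u x| ≤ v x) : radH F hF u ≤ radH F hF v := by
  have key : ∀ s : Finset X, radH F hF (fun x => if x ∈ s then u x else v x) ≤ radH F hF v := by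
    intro s
    induction s using Finset.induction_on with
    | empty => simp
    | insert y s hy ih =>
      refine le_trans (le_of_eq ?_) ((radH_update F hF _ y (u y) ?_).trans ih)
      · congr 1; funext x
        by_cases hx : x = y
        · subst hx; simp
        · simp [hx]
      · simpa [hy] using h y
  simpa using key Finset.univ

lemma radH_le_add (F : Finset (X → Bool)) (hF : F.Nonempty) (u v : X → ℝ) :
    radH F hF u ≤ radH F hF v + (Fintype.card (X → Bool)) * ∑ x, |u x - v x| := by
  unfold radH
  have : ∑ σ : X → Bool, supF F hF (fun x => val (σ x) * u x) ≤
      ∑ σ : X → Bool, (supF F hF (fun x => val (σ x) * v x) + ∑ x, |u x - v x|) := by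
    refine Finset.sum_le_sum fun σ _ => ?_
    refine (supF_le_add F hF _ (fun x => val (σ x) * v x)).trans (le_of_eq ?_)
    simp only [← mul_sub, abs_mul, abs_val, one_mul]
  refine this.trans (le_of_eq ?_)
  rw [Finset.sum_add_distrib, Finset.sum_const, nsmul_eq_mul, Finset.card_univ]

lemma push_update {l : ℕ} (D : Fin l → X) (i : Fin l) (b : X) (e : Fin l → ℝ) (x : X) :
    push (Function.update D i b) e x = (∑ j ∈ Finset.univ.erase i, if D j = x then e j else 0)
      + if b = x then e i else 0 := by
  unfold push
  rw [← Finset.sum_erase_add _ _ (Finset.mem_univ i)]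
  congr 1
  · refine Finset.sum_congr rfl fun j hj => ?_
    rw [Function.update_of_ne (Finset.ne_of_mem_erase hj)]
  · simp

lemma push_one_update {l : ℕ} (D : Fin l → X) (i : Fin l) : 
    ∃ m : X → ℝ, (∀ x, 0 ≤ m x) ∧
     ∀ b x, push (Function.update D i b) (fun _ => 1) x = m x + if b = x then 1 else 0 := by
  refine ⟨_, ?_, fun b x => push_update D i b _ x⟩
  intro x
  exact Finset.sum_nonneg fun j _ => by split_ifs <;> norm_num

lemma radH_bd (F : Finset (X → Bool)) (hF : F.Nonempty) {l : ℕ} (D : Fin l → X) (i : Fin l)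
    (b : X) :
    radH F hF (push (Function.update D i b) (fun _ => 1)) ≤
      radH F hF (push D (fun _ => 1)) + Fintype.card (X → Bool) := by
  obtain ⟨m, hm, h⟩ := push_one_update D i
  have h1 : radH F hF m ≤ radH F hF (push D (fun _ => 1)) := by
    apply radH_mono
    intro x
    have := h (D i) x
    rw [Function.update_eq_self] at this
    rw [this, abs_of_nonneg (hm x)]
    split_ifs <;> linarith
  have h2 := radH_le_add F hF (push (Function.update D i b) (fun _ => 1)) m
  have h3 : ∑ x, |push (Function.update D i b) (fun _ => 1) x - m x| = 1 := by
    simp only [h, add_sub_cancel_left]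
    simp [apply_ite]
  rw [h3] at h2
  linarith

/-! expectation and McDiarmid -/

lemma hoeffding_fin (p : X → ℝ) (hp : ∀ x, 0 ≤ p x) (hp1 : ∑ x, p x = 1) (h : X → ℝ) (c : ℝ)
    (hc : ∀ x y, h x - h y ≤ c) (t : ℝ) :
    ∑ x, p x * Real.exp (t * h x) ≤ Real.exp (t * ∑ x, p x * h x + t ^ 2 * c ^ 2 / 8) := by
  have hne : Nonempty X := by
    by_contra hX
    rw [not_nonempty_iff] at hX
    simp at hp1
  let _ : MeasurableSpace X := ⊤
  have : MeasurableSingletonClass X := ⟨fun _ => trivial⟩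
  let μ : MeasureTheory.Measure X := ∑ x, ENNReal.ofReal (p x) • MeasureTheory.Measure.dirac x
  have hμ : MeasureTheory.IsProbabilityMeasure μ := by
    constructor
    simp only [μ, MeasureTheory.Measure.finsetSum_apply, MeasureTheory.Measure.smul_apply,
      MeasureTheory.measure_univ, smul_eq_mul, mul_one]
    rw [← ENNReal.ofReal_sum_of_nonneg (fun x _ => hp x), hp1, ENNReal.ofReal_one]
  have hint : ∀ g : X → ℝ, ∫ x, g x ∂μ = ∑ x, p x * g x := by
    intro g
    rw [MeasureTheory.integral_finsetSum_measure (fun x _ => MeasureTheory.Integrable.smul_measure MeasureTheory.Integrable.of_finite ENNReal.ofReal_ne_top)]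
    refine Finset.sum_congr rfl fun x _ => ?_
    rw [MeasureTheory.integral_smul_measure, MeasureTheory.integral_dirac,
      ENNReal.toReal_ofReal (hp x), smul_eq_mul]
  obtain ⟨x0, hx0⟩ := Finite.exists_min h
  have hs := ProbabilityTheory.hasSubgaussianMGF_of_mem_Icc (μ := μ) (X := h) (a := h x0)
    (b := h x0 + c) (measurable_of_finite h).aemeasurable
    (Filter.Eventually.of_forall fun x => ⟨hx0 x, by linarith [hc x x0]⟩)
  have h1 := hs.mgf_le t
  rw [ProbabilityTheory.mgf, hint, hint] at h1
  have hc0 : 0 ≤ c := by simpa using hc x0 x0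
  have e1 : ∑ x, p x * Real.exp (t * h x) = Real.exp (t * ∑ x, p x * h x) *
      ∑ x, p x * Real.exp (t * (h x - ∑ x, p x * h x)) := by
    rw [Finset.mul_sum]
    refine Finset.sum_congr rfl fun x _ => ?_
    rw [mul_left_comm, ← Real.exp_add]
    congr 2; ring
  rw [e1, Real.exp_add]
  refine mul_le_mul_of_nonneg_left (h1.trans (le_of_eq ?_)) (Real.exp_pos _).le
  congr 1
  simp only [add_sub_cancel_left, NNReal.coe_pow, NNReal.coe_div, coe_nnnorm, NNReal.coe_ofNat,
    Real.norm_eq_abs, div_pow, sq_abs]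
  ring

lemma expE_succ (p : X → ℝ) (n : ℕ) (g : (Fin (n+1) → X) → ℝ) :
    expE p (n+1) g = ∑ x, p x * expE p n (fun D => g (Fin.cons x D)) := by
  unfold expE
  rw [← (Fin.consEquiv (fun _ => X)).sum_comp, Fintype.sum_prod_type]
  refine Finset.sum_congr rfl fun x _ => ?_
  rw [Finset.mul_sum]
  refine Finset.sum_congr rfl fun D _ => ?_
  simp [Fin.consEquiv, Fin.prod_univ_succ, mul_assoc]

lemma expE_mono (p : X → ℝ) (hp : ∀ x, 0 ≤ p x) (n : ℕ) (g h : (Fin n → X) → ℝ)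
    (H : ∀ D, g D ≤ h D) : expE p n g ≤ expE p n h :=
  Finset.sum_le_sum fun D _ =>
    mul_le_mul_of_nonneg_left (H D) (Finset.prod_nonneg fun _ _ => hp _)

lemma expE_one (p : X → ℝ) (hp1 : ∑ x, p x = 1) (n : ℕ) : expE p n (fun _ => 1) = 1 := by
  induction n with
  | zero => simp [expE]
  | succ n ih => rw [expE_succ]; simp only [ih, mul_one, hp1]

lemma expE_sub (p : X → ℝ) (n : ℕ) (g h : (Fin n → X) → ℝ) :
    expE p n (fun D => g D - h D) = expE p n g - expE p n h := by
  simp [expE, mul_sub]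

lemma expE_add (p : X → ℝ) (n : ℕ) (g h : (Fin n → X) → ℝ) :
    expE p n (fun D => g D + h D) = expE p n g + expE p n h := by
  simp [expE, mul_add, Finset.sum_add_distrib]

lemma expE_cmul (p : X → ℝ) (n : ℕ) (c : ℝ) (g : (Fin n → X) → ℝ) :
    expE p n (fun D => c * g D) = c * expE p n g := by
  simp only [expE, Finset.mul_sum, mul_left_comm]

lemma expE_sum {ι : Type*} (s : Finset ι) (p : X → ℝ) (n : ℕ) (g : ι → (Fin n → X) → ℝ) :
    expE p n (fun D => ∑ i ∈ s, g i D) = ∑ i ∈ s, expE p n (g i) := by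
  simp only [expE, Finset.mul_sum]
  rw [Finset.sum_comm]

lemma mcdiarmid (p : X → ℝ) (hp : ∀ x, 0 ≤ p x) (hp1 : ∑ x, p x = 1) (c t : ℝ) (n : ℕ) :
    ∀ (g : (Fin n → X) → ℝ), (∀ D i b, g (Function.update D i b) - g D ≤ c) →
    expE p n (fun D => Real.exp (t * g D)) ≤
      Real.exp (t * expE p n g + n * (t ^ 2 * c ^ 2 / 8)) := by
  induction n with
  | zero => intro g _; simp [expE]
  | succ n ih =>
    intro g hg
    rw [expE_succ]
    have h1 : ∀ x, expE p n (fun D => Real.exp (t * g (Fin.cons x D))) ≤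
        Real.exp (t * expE p n (fun D => g (Fin.cons x D)) + n * (t ^ 2 * c ^ 2 / 8)) := by
      intro x
      refine ih (fun D => g (Fin.cons x D)) ?_
      intro D i b
      rw [Fin.cons_update]
      exact hg _ _ _
    have h2 := hoeffding_fin p hp hp1 (fun x => expE p n (fun D => g (Fin.cons x D))) c (by
      intro x y
      rw [← expE_sub]
      have : expE p n (fun D => g (Fin.cons x D) - g (Fin.cons y D)) ≤ expE p n (fun _ => c * 1) := by
        refine expE_mono p hp n _ _ fun D => ?_
        have := hg (Fin.cons y D) 0 x
        rw [Fin.update_cons_zero] at this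
        simpa using this
      rwa [expE_cmul, expE_one p hp1, mul_one] at this) t
    calc _ ≤ ∑ x, p x * Real.exp (t * expE p n (fun D => g (Fin.cons x D)) +
            n * (t ^ 2 * c ^ 2 / 8)) :=
          Finset.sum_le_sum fun x _ => mul_le_mul_of_nonneg_left (h1 x) (hp x)
      _ = Real.exp (n * (t ^ 2 * c ^ 2 / 8)) *
            ∑ x, p x * Real.exp (t * expE p n (fun D => g (Fin.cons x D))) := by
          rw [Finset.mul_sum]
          refine Finset.sum_congr rfl fun x _ => ?_
          rw [Real.exp_add]; ring
      _ ≤ _ := mul_le_mul_of_nonneg_left h2 (Real.exp_pos _).le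
      _ = _ := by
          rw [← Real.exp_add, expE_succ]
          congr 1
          push_cast
          ring

lemma expE_coord (p : X → ℝ) (hp1 : ∑ x, p x = 1) (n : ℕ) (j : Fin n) (x : X) :
    expE p n (fun D => if D j = x then 1 else 0) = p x := by
  have h := Finset.prod_univ_sum (fun _ : Fin n => (Finset.univ : Finset X))
    (fun i y => if i = j then (if y = x then p y else 0) else p y)
  rw [Fintype.piFinset_univ] at h
  rw [Finset.prod_eq_single j (by intro b _ hb; simp [hb, hp1]) (by simp)] at h
  simp only [if_true, Finset.sum_ite_eq', Finset.mem_univ] at h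
  rw [h]
  unfold expE
  refine Finset.sum_congr rfl fun D _ => ?_
  rw [← Finset.mul_prod_erase _ _ (Finset.mem_univ j), ← Finset.mul_prod_erase _ _ (Finset.mem_univ j)]
  have : ∏ i ∈ Finset.univ.erase j, (if i = j then (if D i = x then p (D i) else 0) else p (D i))
      = ∏ i ∈ Finset.univ.erase j, p (D i) :=
    Finset.prod_congr rfl fun i hi => by rw [if_neg (Finset.ne_of_mem_erase hi)]
  rw [this]
  by_cases hx : D j = x <;> simp [hx]

lemma expE_push (p : X → ℝ) (hp1 : ∑ x, p x = 1) (n : ℕ) (x : X) :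
    expE p n (fun D => push D (fun _ => 1) x) = n * p x := by
  unfold push
  rw [expE_sum]
  simp [expE_coord p hp1]


lemma expE_const (p : X → ℝ) (hp1 : ∑ x, p x = 1) (n : ℕ) (c : ℝ) :
    expE p n (fun _ => c) = c := by
  have := expE_cmul p n c (fun _ => 1)
  rw [expE_one p hp1] at this
  simpa using this

lemma push_mul {l : ℕ} (D : Fin l → X) (e : Fin l → ℝ) (h : X → ℝ) (x : X) :
    push D (fun i => e i * h (D i)) x = h x * push D e x := by
  unfold push
  rw [Finset.mul_sum]
  refine Finset.sum_congr rfl fun i _ => ?_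
  split_ifs with hx
  · simp only [hx, mul_comm]
  · simp

lemma abs_push {l : ℕ} (D : Fin l → X) (e : Fin l → Bool) (x : X) :
    |push D (fun i => val (e i)) x| ≤ push D (fun _ => 1) x := by
  unfold push
  refine (Finset.abs_sum_le_sum_abs _ _).trans (le_of_eq ?_)
  refine Finset.sum_congr rfl fun i _ => ?_
  split_ifs <;> simp [abs_val]

lemma bool_avg (F : Finset (X → Bool)) (hF : F.Nonempty) (s : X → Bool) {l : ℕ}
    (D : Fin l → X) :
    (Fintype.card (X → Bool) : ℝ) *
      ∑ e : Fin l → Bool, supF F hF (fun x => val (s x) * push D (fun i => val (e i)) x) ≤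
    2 ^ l * radH F hF (push D (fun _ => 1)) := by
  have h1 : ∀ σ : X → Bool,
      ∑ e : Fin l → Bool, supF F hF (fun x => val (s x) * push D (fun i => val (e i)) x) =
      ∑ e : Fin l → Bool, supF F hF (fun x => val (σ x) * push D (fun i => val (e i)) x) := by
    intro σ
    have hinv : Function.Involutive
        (fun (e : Fin l → Bool) (i : Fin l) => (e i == (σ (D i) == s (D i)))) := by
      intro e; funext i; simp only; cases e i <;> cases σ (D i) <;> cases s (D i) <;> rfl
    refine Fintype.sum_equiv hinv.toPerm _ _ ?_
    intro e
    congr 1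
    funext x
    simp only [Function.Involutive.coe_toPerm, val_beq]
    rw [push_mul D (fun i => val (e i)) (fun x => val (σ x) * val (s x))]
    have := val_sq (σ x)
    linear_combination (-(val (s x) * push D (fun i => val (e i)) x)) * this
  calc _ = ∑ σ : X → Bool, ∑ e : Fin l → Bool,
        supF F hF (fun x => val (σ x) * push D (fun i => val (e i)) x) := by
        rw [← Finset.sum_congr rfl (fun σ _ => h1 σ)]
        rw [Finset.sum_const, nsmul_eq_mul, Finset.card_univ]
    _ = ∑ e : Fin l → Bool, radH F hF (push D (fun i => val (e i))) := by
        rw [Finset.sum_comm]; rfl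
    _ ≤ ∑ e : Fin l → Bool, radH F hF (push D (fun _ => 1)) :=
        Finset.sum_le_sum fun e _ => radH_mono F hF _ _ (abs_push D e)
    _ = _ := by
        rw [Finset.sum_const, nsmul_eq_mul, Finset.card_univ]
        simp

lemma expE_swap (p : X → ℝ) {l : ℕ} (e : Fin l → Bool) (G : (Fin l → X) → (Fin l → X) → ℝ) :
    expE p l (fun D => expE p l (fun D' => G D D')) =
    expE p l (fun D => expE p l (fun D' =>
      G (fun i => if e i then D i else D' i) (fun i => if e i then D' i else D i))) := by
  have hexp : ∀ G : (Fin l → X) → (Fin l → X) → ℝ,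
      expE p l (fun D => expE p l (fun D' => G D D')) =
      ∑ q : (Fin l → X) × (Fin l → X), (∏ i, p (q.1 i) * p (q.2 i)) * G q.1 q.2 := by
    intro G
    rw [Fintype.sum_prod_type]
    simp only [expE, Finset.mul_sum, Finset.prod_mul_distrib, mul_assoc]
  rw [hexp, hexp]
  have hinv : Function.Involutive (fun (q : (Fin l → X) × (Fin l → X)) =>
      ((fun i => if e i then q.1 i else q.2 i, fun i => if e i then q.2 i else q.1 i) :
        (Fin l → X) × (Fin l → X))) := by
    intro q
    ext i
    · simp only; cases e i <;> simp
    · simp only; cases e i <;> simp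
  symm
  refine Fintype.sum_equiv hinv.toPerm _ _ ?_
  intro q
  simp only [Function.Involutive.coe_toPerm]
  congr 1
  refine Finset.prod_congr rfl fun i _ => ?_
  cases e i <;> simp [mul_comm]

noncomputable def phiVec (p : X → ℝ) (s : X → Bool) {l : ℕ} (D : Fin l → X) (x : X) : ℝ :=
  val (s x) * ((push D (fun _ => 1) x / l - p x) / 2)

lemma symm_bound (p : X → ℝ) (hp : ∀ x, 0 ≤ p x) (hp1 : ∑ x, p x = 1) (s : X → Bool) {l : ℕ}
    (hl : 1 ≤ l) (F : Finset (X → Bool)) (hF : F.Nonempty) :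
    expE p l (fun D => supF F hF (phiVec p s D)) ≤
      expE p l (fun D => (1 / (Fintype.card (X → Bool)) : ℝ) *
        ((1 / l : ℝ) * radH F hF (push D (fun _ => 1)))) := by
  have hl0 : (0 : ℝ) < l := by exact_mod_cast hl
  set G : (Fin l → X) → (Fin l → X) → ℝ := fun D D' =>
    supF F hF (fun x => val (s x) * (push D (fun _ => 1) x - push D' (fun _ => 1) x)) with hG
  set T : (Fin l → Bool) → (Fin l → X) → ℝ := fun e D =>
    supF F hF (fun x => val (s x) * push D (fun i => val (e i)) x) with hT
  set K : ℝ := expE p l (fun D => expE p l (fun D' => G D D')) with hK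
  have c1 : expE p l (fun D => supF F hF (phiVec p s D)) ≤ (1 / (2 * l)) * K := by
    rw [hK, ← expE_cmul]
    refine expE_mono p hp _ _ _ fun D => ?_
    have h := supF_sum F hF Finset.univ (fun D' : Fin l → X => ∏ i, p (D' i))
      (fun D' _ => Finset.prod_nonneg fun _ _ => hp _)
      (fun D' x => val (s x) * (push D (fun _ => 1) x - push D' (fun _ => 1) x))
    have e : (fun x => ∑ D' : Fin l → X, (∏ i, p (D' i)) *
        (val (s x) * (push D (fun _ => 1) x - push D' (fun _ => 1) x))) =
        fun x => (2 * l : ℝ) * phiVec p s D x := by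
      funext x
      change expE p l (fun D' => val (s x) * (push D (fun _ => 1) x - push D' (fun _ => 1) x)) = _
      rw [expE_cmul, expE_sub, expE_push p hp1]
      have : expE p l (fun _ => push D (fun _ => 1) x) = push D (fun _ => 1) x := by
        have := expE_cmul p l (push D (fun _ => 1) x) (fun _ => 1)
        rw [expE_one p hp1] at this
        simpa using this
      rw [this, phiVec]
      field_simp
    rw [e, supF_mul F hF _ (by positivity)] at h
    rw [one_div, ← div_eq_inv_mul, le_div_iff₀ (by positivity), mul_comm]
    exact h
  have c2 : ∀ e : Fin l → Bool, K ≤ expE p l (T e) + expE p l (T (fun i => !(e i))) := by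
    intro e
    rw [hK, expE_swap p e]
    have h1 : ∀ D D' : Fin l → X,
        G (fun i => if e i then D i else D' i) (fun i => if e i then D' i else D i) ≤
          T e D + T (fun i => !(e i)) D' := by
      intro D D'
      have := supF_comb F hF 1 1 zero_le_one zero_le_one
        (fun x => val (s x) * push D (fun i => val (e i)) x)
        (fun x => val (s x) * push D' (fun i => val (!(e i))) x)
      simp only [one_mul] at this
      refine le_trans (le_of_eq ?_) this
      simp only [hG]
      congr 1
      funext x
      rw [← mul_add]
      congr 1
      unfold push
      rw [← Finset.sum_sub_distrib, ← Finset.sum_add_distrib]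
      refine Finset.sum_congr rfl fun i _ => ?_
      cases he : e i
      · by_cases ha : D i = x <;> by_cases hb : D' i = x <;> simp [_root_.val, ha, hb, he]
      · by_cases ha : D i = x <;> by_cases hb : D' i = x <;> simp [_root_.val, ha, hb, he]
    have h2 : expE p l (fun D => expE p l (fun D' =>
        G (fun i => if e i then D i else D' i) (fun i => if e i then D' i else D i))) ≤
        expE p l (fun D => expE p l (fun D' => T e D * 1 + T (fun i => !(e i)) D')) :=
      expE_mono p hp _ _ _ fun D => expE_mono p hp _ _ _ fun D' => by
        rw [mul_one]; exact h1 D D'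
    refine h2.trans (le_of_eq ?_)
    simp only [expE_add, expE_const p hp1, mul_one]
  have c3 : (2:ℝ) ^ l * K ≤ 2 * ∑ e, expE p l (T e) := by
    have h := Finset.sum_le_sum (s := Finset.univ) fun e _ => c2 e
    rw [Finset.sum_const, nsmul_eq_mul, Finset.card_univ, Finset.sum_add_distrib] at h
    have hinv : Function.Involutive (fun (e : Fin l → Bool) (i : Fin l) => !(e i)) := by
      intro e; funext i; simp
    have h' : ∑ e : Fin l → Bool, expE p l (T (fun i => !(e i))) = ∑ e, expE p l (T e) :=
      Fintype.sum_equiv hinv.toPerm _ _ (fun e => rfl)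
    rw [h'] at h
    simp only [Fintype.card_pi, Fintype.card_bool, Finset.prod_const, Finset.card_univ,
      Fintype.card_fin, Nat.cast_pow, Nat.cast_ofNat] at h
    linarith
  have hN : (0:ℝ) < Fintype.card (X → Bool) := by exact_mod_cast Fintype.card_pos
  have c4 : (Fintype.card (X → Bool) : ℝ) * ∑ e, expE p l (T e) ≤
      2 ^ l * expE p l (fun D => radH F hF (push D (fun _ => 1))) := by
    rw [← expE_sum, ← expE_cmul, ← expE_cmul]
    exact expE_mono p hp _ _ _ fun D => bool_avg F hF s D
  rw [expE_cmul, expE_cmul]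
  set Q := expE p l (fun D => radH F hF (push D (fun _ => 1)))
  have c5 : (Fintype.card (X → Bool) : ℝ) * K ≤ 2 * Q := by
    have h2 : (0:ℝ) < 2 ^ l := by positivity
    have := mul_le_mul_of_nonneg_left c3 hN.le
    nlinarith
  refine c1.trans ?_
  rw [← mul_assoc, one_div_mul_one_div, one_div, one_div, ← div_eq_inv_mul, ← div_eq_inv_mul,
    div_le_div_iff₀ (by positivity) (by positivity)]
  nlinarith

lemma rademacher_eq (F : Finset (X → Bool)) (hF : F.Nonempty) {l : ℕ} (D : Fin l → X) :
    rademacher F hF D = (1 / (Fintype.card (X → Bool)) : ℝ) *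
        ((1 / l : ℝ) * radH F hF (push D (fun _ => 1))) := by
  unfold rademacher radH
  congr 1
  rw [Finset.mul_sum]
  refine Finset.sum_congr rfl fun σ _ => ?_
  rw [supF, Finset.mul₀_sup' (by positivity)]
  congr 1
  funext f
  have := push_sum D (fun _ => 1) (fun x => val (σ x) * val (f x))
  simp only [one_mul] at this
  rw [← this]
  congr 1
  refine Finset.sum_congr rfl fun x _ => ?_
  ring

lemma ind_eq (a b : Bool) : (if a ≠ b then (1:ℝ) else 0) = (1 - val b * val a) / 2 := by
  cases a <;> cases b <;> norm_num [_root_.val]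

lemma risk_sub (p : X → ℝ) (hp1 : ∑ x, p x = 1) (s : X → Bool) {l : ℕ}
    (hl : 1 ≤ l) (D : Fin l → X) (f : X → Bool) :
    risk p s f - empRisk f D (fun i => s (D i)) = ∑ x, phiVec p s D x * val (f x) := by
  have hl0 : (0 : ℝ) < l := by exact_mod_cast hl
  unfold risk empRisk phiVec
  simp only [ind_eq]
  have h := push_sum D (fun _ => 1) (fun x => (1 - val (s x) * val (f x)) / 2)
  have h' := push_sum D (fun _ => 1) (fun x => 1)
  simp only [one_mul, mul_one] at h h'
  simp only [Finset.sum_const, Finset.card_univ, Fintype.card_fin, nsmul_eq_mul, mul_one] at h'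
  rw [← h, Finset.mul_sum, ← Finset.sum_sub_distrib]
  have h3 : ∑ x, (p x - push D (fun _ => 1) x / l) / 2 = 0 := by
    rw [← Finset.sum_div, Finset.sum_sub_distrib, ← Finset.sum_div, hp1, h']
    field_simp
    simp
  rw [← sub_eq_zero, ← Finset.sum_sub_distrib, ← h3]
  refine Finset.sum_congr rfl fun x _ => ?_
  field_simp
  ring

lemma phi_bd (p : X → ℝ) (s : X → Bool) (F : Finset (X → Bool)) (hF : F.Nonempty) {l : ℕ}
    (hl : 1 ≤ l) (D : Fin l → X) (i : Fin l) (b : X) :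
    supF F hF (phiVec p s (Function.update D i b)) - supF F hF (phiVec p s D) ≤ 1 / l := by
  have hl0 : (0 : ℝ) < l := by exact_mod_cast hl
  have h1 := supF_le_add F hF (phiVec p s (Function.update D i b)) (phiVec p s D)
  obtain ⟨m, hm, h⟩ := push_one_update D i
  have hD : ∀ x, push D (fun _ => 1) x = m x + if D i = x then 1 else 0 := by
    intro x
    have := h (D i) x
    rwa [Function.update_eq_self] at this
  have h2 : ∑ x, |phiVec p s (Function.update D i b) x - phiVec p s D x| ≤
      ∑ x, ((if b = x then 1 / (2 * l : ℝ) else 0) + (if D i = x then 1 / (2 * l : ℝ) else 0)) := by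
    refine Finset.sum_le_sum fun x _ => ?_
    unfold phiVec
    rw [← mul_sub, abs_mul, abs_val, one_mul, h, hD]
    have hpos : (0:ℝ) < 1 / (2 * l) := by positivity
    have e : ((m x + if b = x then 1 else 0) / l - p x) / 2 -
      ((m x + if D i = x then 1 else 0) / l - p x) / 2 = (if b = x then 1 / (2 * l : ℝ) else 0) -
        (if D i = x then 1 / (2 * l : ℝ) else 0) := by
      split_ifs <;> field_simp <;> ring
    rw [e, abs_le]
    split_ifs <;> constructor <;> linarith
  rw [Finset.sum_add_distrib] at h2
  simp only [Finset.sum_ite_eq, Finset.mem_univ, if_true] at h2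
  have : 1 / (2 * l : ℝ) + 1 / (2 * l) = 1 / l := by field_simp; norm_num
  linarith

end helpers

/-- Empirical Rademacher bound: with probability at least `1 - δ` over the
i.i.d. draw of `D` from `p`, every `f ∈ F` satisfies
`R(f) ≤ R(f,D,L) + 𝓡(F,D) + c₃√((1 - log₂ δ)/l)`, with `c₃ = √(2 ln 2)`. -/
theorem empirical_rademacher_bound
    {X : Type*} [Fintype X] [Nonempty X]
    (p : X → ℝ) (hp : ∀ x, 0 ≤ p x) (hp1 : ∑ x, p x = 1)
    (σs : X → Bool) {l : ℕ} (hl : 1 ≤ l)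
    (F : Finset (X → Bool)) (hF : F.Nonempty)
    (δ : ℝ) (hδ0 : 0 < δ) (hδ1 : δ < 1) :
    1 - δ ≤ ∑ D : Fin l → X,
      if ∀ f ∈ F,
          risk p σs f ≤ empRisk f D (fun i => σs (D i))
            + rademacher F hF D
            + Real.sqrt (2 * Real.log 2) * Real.sqrt ((1 - Real.logb 2 δ) / l)
        then ∏ i, p (D i) else 0 := by
  have hl0 : (0 : ℝ) < l := by exact_mod_cast hl
  have hN : (0:ℝ) < Fintype.card (X → Bool) := by exact_mod_cast Fintype.card_pos
  set ε : ℝ := Real.sqrt (2 * Real.log 2) * Real.sqrt ((1 - Real.logb 2 δ) / l) with hε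
  have hlog2 : 0 < Real.log 2 := Real.log_pos (by norm_num)
  have hlogb : Real.logb 2 δ < 0 := Real.logb_neg (by norm_num) hδ0 hδ1
  have hεsq : ε ^ 2 * l = 2 * (Real.log 2 - Real.log δ) := by
    rw [hε, mul_pow, Real.sq_sqrt (by positivity),
      Real.sq_sqrt (div_nonneg (by linarith) hl0.le), Real.logb]
    field_simp
  set g : (Fin l → X) → ℝ := fun D => supF F hF (phiVec p σs D) - rademacher F hF D with hg
  have hgood : ∀ D, g D ≤ ε → ∀ f ∈ F, risk p σs f ≤ empRisk f D (fun i => σs (D i))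
            + rademacher F hF D + ε := by
    intro D hD f hf
    have h1 := risk_sub p hp1 σs hl D f
    have h2 := le_supF F hF (phiVec p σs D) hf
    simp only [hg] at hD
    linarith
  have hbd : ∀ D i b, g (Function.update D i b) - g D ≤ 2 / l := by
    intro D i b
    have h1 := phi_bd p σs F hF hl D i b
    have h2 := radH_bd F hF (Function.update D i b) i (D i)
    rw [Function.update_idem, Function.update_eq_self] at h2
    have h3 : rademacher F hF D ≤ rademacher F hF (Function.update D i b) + 1 / l := by
      rw [rademacher_eq, rademacher_eq]
      have h4 := mul_le_mul_of_nonneg_left h2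
        (show (0:ℝ) ≤ (1 / (Fintype.card (X → Bool)) : ℝ) * (1 / l : ℝ) by positivity)
      have h5 : (1 / (Fintype.card (X → Bool)) : ℝ) * (1 / l : ℝ) * Fintype.card (X → Bool)
        = 1 / l := by field_simp
      rw [mul_add, h5] at h4
      linarith
    have : (2:ℝ) / l = 1 / l + 1 / l := by ring
    simp only [hg]
    linarith
  have hEg : expE p l g ≤ 0 := by
    have h := symm_bound p hp hp1 σs hl F hF
    rw [hg, expE_sub]
    have e := congrArg (expE p l) (funext fun D => rademacher_eq F hF D)
    rw [← e] at h
    exact sub_nonpos.mpr h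
  have hε0 : 0 ≤ ε := by positivity
  have hM := mcdiarmid p hp hp1 (2 / l) (l * ε) l g hbd
  have hM2 : expE p l (fun D => Real.exp (l * ε * g D)) ≤ Real.exp (l * ε ^ 2 / 2) := by
    refine hM.trans (Real.exp_le_exp.mpr ?_)
    have : l * ((l * ε) ^ 2 * (2 / l : ℝ) ^ 2 / 8) = l * ε ^ 2 / 2 := by
      field_simp; norm_num
    rw [this]
    have := mul_nonpos_of_nonneg_of_nonpos (mul_nonneg hl0.le hε0) hEg
    linarith
  have hM3 : expE p l (fun D => Real.exp (- (l * ε ^ 2)) * Real.exp (l * ε * g D)) ≤ δ := by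
    rw [expE_cmul]
    refine (mul_le_mul_of_nonneg_left hM2 (Real.exp_pos _).le).trans ?_
    rw [← Real.exp_add]
    have : -(l * ε ^ 2) + l * ε ^ 2 / 2 = Real.log δ - Real.log 2 := by linarith
    rw [this, ← Real.le_log_iff_exp_le hδ0]
    linarith
  have hfin : expE p l (fun D => 1 - Real.exp (- (l * ε ^ 2)) * Real.exp (l * ε * g D)) ≤
      ∑ D : Fin l → X, if ∀ f ∈ F, risk p σs f ≤ empRisk f D (fun i => σs (D i))
            + rademacher F hF D + ε then ∏ i, p (D i) else 0 := by
    refine Finset.sum_le_sum fun D _ => ?_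
    have hP : 0 ≤ ∏ i, p (D i) := Finset.prod_nonneg fun _ _ => hp _
    split_ifs with hc
    · have := mul_nonneg hP (mul_pos (Real.exp_pos (- (l * ε ^ 2)))
        (Real.exp_pos (l * ε * g D))).le
      linarith
    · have hlt : ε < g D := by
        by_contra hh
        exact hc (hgood D (not_lt.mp hh))
      refine mul_nonpos_of_nonneg_of_nonpos hP ?_
      beta_reduce
      rw [← Real.exp_add]
      have : 1 ≤ Real.exp (-(l * ε ^ 2) + l * ε * g D) := by
        apply Real.one_le_exp
        have := mul_le_mul_of_nonneg_left hlt.le (mul_nonneg hl0.le hε0)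
        linarith
      linarith
  rw [expE_sub, expE_one p hp1] at hfin
  linarith
end

section
/- With probability at least 1 − δ over the i.i.d. draw of the sample D = (x_1,…,x_l) from P, the following holds: if the entries of D are pairwise distinct, then every f ∈ F satisfies R(f) ≤ R(f,D,L) + c₁·√(1 − ei(𝐑_{F,D},0)/l) + c₂·√((1 − log₂ δ)/l), where L = (σ*(x_1),…,σ*(x_l)), c₁ = √(6/log₂ e) = √(6·ln 2) and c₂ = √(1/log₂ e) = √(ln 2). -/
open Classical Finset

/-- The min-risk: the minimum of the empirical risk over the repertoire `F`,
with labels produced by supervisor `σ`. -/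
noncomputable def minRisk {X : Type*} {l : ℕ}
    (F : Finset (X → Bool)) (hF : F.Nonempty) (D : Fin l → X) (σ : X → Bool) : ℝ :=
  F.inf' hF (fun f => empRisk f D (fun i => σ (D i)))

/-- Effective information generated by a function `g` between finite sets
outputting `b`: `log₂ |domain| - log₂ |g⁻¹(b)|`. -/
noncomputable def ei {A B : Type*} [Fintype A] (g : A → B) (b : B) : ℝ :=
  Real.logb 2 (Fintype.card A) -
    Real.logb 2 ((Finset.univ.filter (fun a => g a = b)).card)


lemma aux_opt (x a b : ℝ) (hb : 0 < b) 
    (h : ∀ t : ℝ, 0 < t → t * x ≤ a + b * t ^ 2) : x ≤ Real.sqrt (4 * a * b) := by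
  rcases le_or_gt x 0 with hx | hx
  · exact hx.trans (Real.sqrt_nonneg _)
  · apply Real.le_sqrt_of_sq_le
    have := h (x / (2 * b)) (by positivity)
    have e1 : x / (2 * b) * x = x ^ 2 / (2 * b) := by ring
    have e2 : b * (x / (2 * b)) ^ 2 = x ^ 2 / (4 * b) := by field_simp; ring
    rw [e1, e2] at this
    have e3 : x ^ 2 / (2 * b) - x ^ 2 / (4 * b) = x ^ 2 / (4 * b) := by field_simp; ring
    have : x ^ 2 / (4 * b) ≤ a := by linarith
    rw [div_le_iff₀ (by positivity)] at this
    linarith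

lemma aux_hoeff {X : Type*} [Fintype X] (p : X → ℝ) (hp : ∀ x, 0 ≤ p x) (hp1 : ∑ x, p x = 1)
    (g : X → ℝ) (hg : ∀ x, g x ∈ Set.Icc (0:ℝ) 1) (t : ℝ) :
    ∑ x, p x * Real.exp (t * ((∑ x, g x * p x) - g x)) ≤ Real.exp (t ^ 2 / 8) := by
  let _ : MeasurableSpace X := ⊤
  let μ : MeasureTheory.Measure X := ∑ x, ENNReal.ofReal (p x) • MeasureTheory.Measure.dirac x
  have hμ : MeasureTheory.IsProbabilityMeasure μ := by
    constructor
    simp [μ]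
    rw [← ENNReal.ofReal_sum_of_nonneg (fun x _ => hp x), hp1]; simp
  have hint : ∀ h : X → ℝ, ∫ x, h x ∂μ = ∑ x, p x * h x := by
    intro h
    rw [MeasureTheory.integral_finsetSum_measure]
    · refine Finset.sum_congr rfl fun x _ => ?_
      rw [MeasureTheory.integral_smul_measure, MeasureTheory.integral_dirac]
      simp [ENNReal.toReal_ofReal (hp x)]
    · intro x _
      exact MeasureTheory.Integrable.of_finite.smul_measure ENNReal.ofReal_ne_top
  have H := ProbabilityTheory.hasSubgaussianMGF_of_mem_Icc (μ := μ) (X := g) (a := 0) (b := 1)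
    (measurable_from_top).aemeasurable (Filter.Eventually.of_forall hg)
  have := H.mgf_le (-t)
  rw [ProbabilityTheory.mgf, hint, hint] at this
  convert this using 1
  · refine Finset.sum_congr rfl fun x _ => ?_
    congr 2
    rw [show ∑ x, g x * p x = ∑ x, p x * g x from Finset.sum_congr rfl fun x _ => mul_comm _ _]
    ring
  · congr 1
    simp
    ring

lemma aux_hoeff_prod {X μ : Type*} [Fintype X] [Fintype μ] [DecidableEq μ] (p : X → ℝ) (hp : ∀ x, 0 ≤ p x)
    (hp1 : ∑ x, p x = 1) (hμ : 0 < Fintype.card μ)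
    (g : X → ℝ) (hg : ∀ x, g x ∈ Set.Icc (0:ℝ) 1) (t : ℝ) :
    ∑ z : μ → X, (∏ j, p (z j)) * Real.exp (t * ((∑ x, g x * p x)
      - (1 / (Fintype.card μ : ℝ)) * ∑ j, g (z j)))
      ≤ Real.exp (t ^ 2 / (8 * Fintype.card μ)) := by
  set m : ℝ := ((Fintype.card μ : ℕ) : ℝ) with hm
  have hm0 : 0 < m := by rw [hm]; exact_mod_cast hμ
  have h1 := aux_hoeff p hp hp1 g hg (t / m)
  have e : ∑ z : μ → X, (∏ j, p (z j)) * Real.exp (t * ((∑ x, g x * p x)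
      - (1 / m) * ∑ j, g (z j)))
      = ∏ _j : μ, ∑ x, p x * Real.exp (t / m * ((∑ x, g x * p x) - g x)) := by
    rw [Finset.prod_univ_sum, Fintype.piFinset_univ]
    refine Finset.sum_congr rfl fun z _ => ?_
    rw [Finset.prod_mul_distrib, ← Real.exp_sum, ← Finset.mul_sum, Finset.sum_sub_distrib]
    congr 2
    simp only [Finset.sum_const, Finset.card_univ, nsmul_eq_mul, ← hm]
    field_simp
  rw [e]
  calc _ ≤ ∏ _j : μ, Real.exp ((t / m) ^ 2 / 8) :=
        Finset.prod_le_prod (fun _ _ => Finset.sum_nonneg fun x _ =>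
          mul_nonneg (hp x) (Real.exp_pos _).le) (fun _ _ => h1)
    _ = _ := by
      rw [← Real.exp_sum]; congr 1
      simp only [Finset.sum_const, Finset.card_univ, nsmul_eq_mul, ← hm]
      field_simp

/-- averaging over permutations -/
lemma aux_perm {ι : Type*} [Fintype ι] [DecidableEq ι] (a : ι → ℝ) (j : ι) :
    ∑ π : Equiv.Perm ι, a (π j) = (Fintype.card (Equiv.Perm ι) : ℝ) * ((1 / (Fintype.card ι : ℝ)) * ∑ i, a i) := by
  have hι : (Fintype.card ι : ℝ) ≠ 0 := by
    have : 0 < Fintype.card ι := Fintype.card_pos_iff.mpr ⟨j⟩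
    positivity
  have h1 : ∀ j', ∑ π : Equiv.Perm ι, a (π j') = ∑ π : Equiv.Perm ι, a (π j) := by
    intro j'
    rw [← Equiv.sum_comp (Equiv.mulRight (Equiv.swap j j'))]
    simp
  have h2 : ∑ j', ∑ π : Equiv.Perm ι, a (π j') = (Fintype.card (Equiv.Perm ι) : ℝ) * ∑ i, a i := by
    rw [Finset.sum_comm]
    simp [Equiv.sum_comp]
  simp only [h1, Finset.sum_const, Finset.card_univ, nsmul_eq_mul] at h2
  field_simp
  linarith

/-- Massart -/
lemma aux_massart {P : Type*} (S : Finset P) (hS : S.Nonempty) {k : ℕ} (hk : 1 ≤ k)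
    (c : P → Fin k → ℝ) (hc : ∀ b i, |c b i| ≤ 1) (M : (Fin k → Bool) → ℝ)
    (hM : ∀ ε, ∃ b ∈ S, M ε ≤ (1 / (k:ℝ)) * ∑ i, (if ε i then -1 else 1) * c b i) :
    (1 / (2:ℝ) ^ k) * ∑ ε, M ε ≤ Real.sqrt (2 * Real.log S.card / k) := by
  have hk0 : (0:ℝ) < k := by exact_mod_cast hk
  have hS0 : (1:ℝ) ≤ S.card := by exact_mod_cast hS.card_pos
  have key := aux_opt ((1 / (2:ℝ) ^ k) * ∑ ε, M ε) (Real.log S.card) (1 / (2 * k)) (by positivity) ?_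
  · refine key.trans (le_of_eq ?_)
    congr 1; field_simp; ring
  intro t ht
  have J := convexOn_exp.map_sum_le (t := (univ : Finset (Fin k → Bool)))
    (w := fun _ => 1 / (2:ℝ)^k) (p := fun ε => t * M ε) (fun _ _ => by positivity)
    (by simp) (fun _ _ => Set.mem_univ _)
  simp only [smul_eq_mul] at J
  have e1 : ∑ ε, 1 / (2:ℝ)^k * (t * M ε) = t * ((1 / (2:ℝ) ^ k) * ∑ ε, M ε) := by
    simp only [Finset.mul_sum]; refine Finset.sum_congr rfl fun _ _ => by ring
  rw [e1] at J
  have b1 : ∀ ε, Real.exp (t * M ε) ≤ ∑ b ∈ S, ∏ i, Real.exp ((if ε i then -1 else 1) * (t / k * c b i)) := by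
    intro ε
    obtain ⟨b, hb, hle⟩ := hM ε
    calc Real.exp (t * M ε) ≤ ∏ i, Real.exp ((if ε i then -1 else 1) * (t / k * c b i)) := by
          rw [← Real.exp_sum]
          apply Real.exp_le_exp.mpr
          calc t * M ε ≤ t * ((1 / (k:ℝ)) * ∑ i, (if ε i then -1 else 1) * c b i) := by gcongr
            _ = _ := by
              simp only [Finset.mul_sum]; refine Finset.sum_congr rfl fun _ _ => by ring
      _ ≤ _ := Finset.single_le_sum (f := fun b => ∏ i, Real.exp ((if ε i then -1 else 1) * (t / k * c b i))) (fun _ _ => Finset.prod_nonneg fun _ _ => (Real.exp_pos _).le) hb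
  have b2 : ∀ b, ∑ ε : Fin k → Bool, ∏ i, Real.exp ((if ε i then -1 else 1) * (t / k * c b i))
      ≤ 2 ^ k * Real.exp (t ^ 2 / (2 * k)) := by
    intro b
    have : ∑ ε : Fin k → Bool, ∏ i, Real.exp ((if ε i then -1 else 1) * (t / k * c b i))
        = ∏ i, ∑ e : Bool, Real.exp ((if e then -1 else 1) * (t / k * c b i)) := by
      rw [Finset.prod_univ_sum, Fintype.piFinset_univ]
    rw [this]
    calc _ ≤ ∏ i : Fin k, 2 * Real.exp (t ^ 2 / (2 * k ^ 2)) := by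
          refine Finset.prod_le_prod (fun _ _ => Finset.sum_nonneg fun _ _ => (Real.exp_pos _).le) fun i _ => ?_
          have h1 := Real.cosh_le_exp_half_sq (t / k * c b i)
          rw [Real.cosh_eq] at h1
          have h2 : (t / k * c b i) ^ 2 / 2 ≤ t ^ 2 / (2 * k ^ 2) := by
            have : (c b i) ^ 2 ≤ 1 := by
              rw [← sq_abs]; exact pow_le_one₀ (abs_nonneg _) (hc b i)
            calc (t / k * c b i) ^ 2 / 2 = t ^ 2 / (2 * k ^ 2) * (c b i) ^ 2 := by field_simp
              _ ≤ t ^ 2 / (2 * k ^ 2) * 1 := by gcongr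
              _ = _ := mul_one _
          have h3 := Real.exp_le_exp.mpr h2
          simp
          linarith
      _ = _ := by
        rw [Finset.prod_const, mul_pow, ← Real.exp_nat_mul]
        simp
        field_simp
  have J2 : Real.exp (t * ((1 / (2:ℝ) ^ k) * ∑ ε, M ε)) ≤ Real.exp (Real.log S.card + 1 / (2 * k) * t ^ 2) := by
    refine J.trans ?_
    rw [← Finset.mul_sum, Real.exp_add, Real.exp_log (by linarith)]
    calc _ ≤ 1 / (2:ℝ)^k * ∑ ε : Fin k → Bool, ∑ b ∈ S, ∏ i, Real.exp ((if ε i then -1 else 1) * (t / k * c b i)) := by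
          gcongr with ε; exact b1 ε
      _ = 1 / (2:ℝ)^k * ∑ b ∈ S, ∑ ε : Fin k → Bool, ∏ i, Real.exp ((if ε i then -1 else 1) * (t / k * c b i)) := by
          rw [Finset.sum_comm]
      _ ≤ 1 / (2:ℝ)^k * ∑ b ∈ S, 2 ^ k * Real.exp (t ^ 2 / (2 * k)) := by
          gcongr with b; exact b2 b
      _ = _ := by
          simp only [Finset.sum_const, nsmul_eq_mul]
          rw [show 1 / (2 * (k:ℝ)) * t ^ 2 = t ^ 2 / (2 * k) by ring]
          field_simp
  exact Real.exp_le_exp.mp J2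

lemma aux_inv {X ι : Type*} [Fintype X] [Fintype ι] (p : X → ℝ) (B : Finset (ι → X))
    (hB : ∀ (π : Equiv.Perm ι) D, D ∈ B → D ∘ π ∈ B) (π : Equiv.Perm ι) (Φ : (ι → X) → ℝ) :
    ∑ D ∈ B, (∏ i, p (D i)) * Φ (D ∘ π) = ∑ D ∈ B, (∏ i, p (D i)) * Φ D := by
  refine Finset.sum_nbij' (fun D => D ∘ π) (fun D => D ∘ π.symm) (fun D h => hB π D h)
    (fun D h => hB π.symm D h) (fun D _ => ?_) (fun D _ => ?_) (fun D _ => ?_)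
  · funext i; simp
  · funext i; simp
  · simp only [Function.comp]
    rw [Equiv.prod_comp π (fun i => p (D i))]

/-- swapping permutation -/
def auxSwapFun {k r : ℕ} (ε : Fin k → Bool) :
    Fin k ⊕ (Fin k ⊕ Fin r) → Fin k ⊕ (Fin k ⊕ Fin r)
  | Sum.inl i => if ε i then Sum.inr (Sum.inl i) else Sum.inl i
  | Sum.inr (Sum.inl i) => if ε i then Sum.inl i else Sum.inr (Sum.inl i)
  | Sum.inr (Sum.inr j) => Sum.inr (Sum.inr j)

lemma auxSwap_inv {k r : ℕ} (ε : Fin k → Bool) :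
    Function.Involutive (auxSwapFun (r := r) ε) := by
  rintro (i | i | j)
  · by_cases h : ε i <;> simp [auxSwapFun, h]
  · by_cases h : ε i <;> simp [auxSwapFun, h]
  · rfl

/-- loss -/
noncomputable def auxLoss {X : Type*} (σs f : X → Bool) (x : X) : ℝ :=
  if f x ≠ σs x then (1 : ℝ) else 0

lemma auxLoss_mem {X : Type*} (σs f : X → Bool) (x : X) :
    auxLoss σs f x ∈ Set.Icc (0:ℝ) 1 := by
  unfold auxLoss; split_ifs <;> simp

lemma aux_S4 {X : Type*} [Fintype X] (p : X → ℝ) (hp : ∀ x, 0 ≤ p x)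
    (σs : X → Bool) (F : Finset (X → Bool)) (hF : F.Nonempty) {k r : ℕ} (hk : 1 ≤ k)
    (B : Finset (Fin k ⊕ (Fin k ⊕ Fin r) → X))
    (hB : ∀ (π : Equiv.Perm (Fin k ⊕ (Fin k ⊕ Fin r))) D, D ∈ B → D ∘ π ∈ B)
    (fh : (Fin k ⊕ (Fin k ⊕ Fin r) → X) → (X → Bool)) (hfh : ∀ D, fh D ∈ F) :
    ∑ D ∈ B, (∏ i, p (D i)) * ((1 / (k:ℝ)) * ∑ i, (auxLoss σs (fh D) (D (Sum.inr (Sum.inl i)))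
        - auxLoss σs (fh D) (D (Sum.inl i))))
      ≤ ∑ D ∈ B, (∏ i, p (D i)) *
        Real.sqrt (2 * Real.log (F.image (fun f => f ∘ D)).card / k) := by
  have hk0 : (0:ℝ) < k := by exact_mod_cast hk
  let A : (X → Bool) → (Fin k ⊕ (Fin k ⊕ Fin r) → X) → ℝ := fun f D =>
    (1 / (k:ℝ)) * ∑ i, (auxLoss σs f (D (Sum.inr (Sum.inl i))) - auxLoss σs f (D (Sum.inl i)))
  have hw : ∀ D : Fin k ⊕ (Fin k ⊕ Fin r) → X, 0 ≤ ∏ i, p (D i) :=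
    fun D => Finset.prod_nonneg fun i _ => hp _
  let M : (Fin k ⊕ (Fin k ⊕ Fin r) → X) → ℝ := fun D => F.sup' hF (fun f => A f D)
  let π : (Fin k → Bool) → Equiv.Perm (Fin k ⊕ (Fin k ⊕ Fin r)) :=
    fun ε => (auxSwap_inv ε).toPerm
  have h1 : ∑ D ∈ B, (∏ i, p (D i)) * A (fh D) D ≤ ∑ D ∈ B, (∏ i, p (D i)) * M D :=
    Finset.sum_le_sum fun D _ => mul_le_mul_of_nonneg_left
      (Finset.le_sup' (fun f => A f D) (hfh D)) (hw D)
  have h2 : ∑ D ∈ B, (∏ i, p (D i)) * M D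
      = ∑ D ∈ B, (∏ i, p (D i)) * ((1 / (2:ℝ) ^ k) * ∑ ε, M (D ∘ π ε)) := by
    have : ∑ ε : Fin k → Bool, ∑ D ∈ B, (∏ i, p (D i)) * M (D ∘ π ε)
        = 2 ^ k * ∑ D ∈ B, (∏ i, p (D i)) * M D := by
      simp only [aux_inv p B hB]
      simp
    rw [Finset.sum_comm] at this
    have e : ∀ D : Fin k ⊕ (Fin k ⊕ Fin r) → X, (∏ i, p (D i)) * ((1 / (2:ℝ) ^ k) * ∑ ε, M (D ∘ π ε))
      = (1 / (2:ℝ) ^ k) * ∑ ε, (∏ i, p (D i)) * M (D ∘ π ε) := by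
      intro D; rw [← Finset.mul_sum]; ring
    simp only [e]
    rw [← Finset.mul_sum, this]
    field_simp
  refine h1.trans (h2.le.trans ?_)
  refine Finset.sum_le_sum fun D _ => mul_le_mul_of_nonneg_left ?_ (hw D)
  let lo : (Fin k ⊕ (Fin k ⊕ Fin r) → Bool) → (Fin k ⊕ (Fin k ⊕ Fin r)) → ℝ :=
    fun b i => if b i ≠ σs (D i) then (1:ℝ) else 0
  have hlo : ∀ b i, lo b i ∈ Set.Icc (0:ℝ) 1 := by
    intro b i; simp only [lo]; split_ifs <;> simp
  refine aux_massart (F.image (fun f => f ∘ D)) (hF.image _) hk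
    (fun b i => lo b (Sum.inr (Sum.inl i)) - lo b (Sum.inl i)) ?_ _ ?_
  · intro b i
    have h1 := hlo b (Sum.inr (Sum.inl i))
    have h2 := hlo b (Sum.inl i)
    rw [abs_le]; constructor <;> linarith [h1.1, h1.2, h2.1, h2.2]
  · intro ε
    obtain ⟨f, hf, hfe⟩ := Finset.exists_mem_eq_sup' hF (fun f => A f (D ∘ π ε))
    refine ⟨f ∘ D, Finset.mem_image_of_mem _ hf, ?_⟩
    refine le_of_eq (hfe.trans ?_)
    simp only [A]
    congr 1
    refine Finset.sum_congr rfl fun i _ => ?_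
    by_cases h : ε i <;> simp [π, auxSwapFun, h, lo, auxLoss]

lemma aux_S5 {X μ κ : Type*} [Fintype X] [Fintype μ] [Fintype κ] [DecidableEq μ] [DecidableEq κ] (p : X → ℝ) (hp : ∀ x, 0 ≤ p x)
    (hp1 : ∑ x, p x = 1) (hμ : 0 < Fintype.card μ)
    (σs : X → Bool) (B : Finset (κ ⊕ μ → X)) (u : ℝ)
    (hW : Real.exp (-u) ≤ ∑ D ∈ B, ∏ i, p (D i))
    (fh : (κ → X) → (X → Bool)) :
    ∑ D ∈ B, (∏ i, p (D i)) * (risk p σs (fh (D ∘ Sum.inl)) -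
       (1 / (Fintype.card μ : ℝ)) * ∑ j, auxLoss σs (fh (D ∘ Sum.inl)) (D (Sum.inr j)))
      ≤ (∑ D ∈ B, ∏ i, p (D i)) * Real.sqrt (u / (2 * Fintype.card μ)) := by
  set m : ℝ := ((Fintype.card μ : ℕ) : ℝ) with hm
  have hm0 : 0 < m := by rw [hm]; exact_mod_cast hμ
  set W := ∑ D ∈ B, ∏ i, p (D i) with hWd
  have hW0 : 0 < W := (Real.exp_pos _).trans_le hW
  have hw : ∀ D : κ ⊕ μ → X, 0 ≤ ∏ i, p (D i) :=
    fun D => Finset.prod_nonneg fun i _ => hp _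
  set Z : (κ ⊕ μ → X) → ℝ := fun D => risk p σs (fh (D ∘ Sum.inl)) -
       (1 / m) * ∑ j, auxLoss σs (fh (D ∘ Sum.inl)) (D (Sum.inr j)) with hZ
  change ∑ D ∈ B, (∏ i, p (D i)) * Z D ≤ _
  rw [mul_comm W, ← div_le_iff₀ hW0]
  have key := aux_opt ((∑ D ∈ B, (∏ i, p (D i)) * Z D) / W) u (1 / (8 * m)) (by positivity) ?_
  · refine key.trans (le_of_eq ?_)
    congr 1; field_simp; ring
  intro t ht
  have J := convexOn_exp.map_sum_le (t := B)
    (w := fun D => (∏ i, p (D i)) / W) (p := fun D => t * Z D)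
    (fun D _ => div_nonneg (hw D) hW0.le)
    (by rw [← Finset.sum_div, ← hWd, div_self hW0.ne']) (fun _ _ => Set.mem_univ _)
  simp only [smul_eq_mul] at J
  have e1 : ∑ D ∈ B, (∏ i, p (D i)) / W * (t * Z D)
      = t * ((∑ D ∈ B, (∏ i, p (D i)) * Z D) / W) := by
    rw [Finset.sum_div, Finset.mul_sum]; refine Finset.sum_congr rfl fun _ _ => by ring
  rw [e1] at J
  have h1 : ∑ D : κ ⊕ μ → X, (∏ i, p (D i)) * Real.exp (t * Z D) ≤ Real.exp (t ^ 2 / (8 * m)) := by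
    rw [← Equiv.sum_comp (Equiv.sumArrowEquivProdArrow κ μ X).symm, Fintype.sum_prod_type]
    have h3 : ∑ y : κ → X, ∏ i, p (y i) = 1 := by
      rw [← Fintype.piFinset_univ, ← Finset.prod_univ_sum (fun _ => univ) (fun _ x => p x)]
      simp [hp1]
    calc _ ≤ ∑ y : κ → X, (∏ i, p (y i)) * Real.exp (t ^ 2 / (8 * m)) := by
          refine Finset.sum_le_sum fun y _ => ?_
          have := aux_hoeff_prod (μ := μ) p hp hp1 hμ (auxLoss σs (fh y)) (auxLoss_mem σs (fh y)) t
          refine le_trans (le_of_eq ?_) (mul_le_mul_of_nonneg_left this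
            (Finset.prod_nonneg fun i _ => hp (y i)))
          rw [Finset.mul_sum]
          refine Finset.sum_congr rfl fun z _ => ?_
          rw [Fintype.prod_sum_type, mul_assoc]
          rfl
      _ = _ := by rw [← Finset.sum_mul, h3, one_mul]
  have h2 : ∑ D ∈ B, (∏ i, p (D i)) / W * Real.exp (t * Z D)
      ≤ Real.exp u * Real.exp (t ^ 2 / (8 * m)) := by
    calc _ = (1 / W) * ∑ D ∈ B, (∏ i, p (D i)) * Real.exp (t * Z D) := by
          rw [Finset.mul_sum]; refine Finset.sum_congr rfl fun _ _ => by ring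
      _ ≤ Real.exp u * ∑ D : κ ⊕ μ → X, (∏ i, p (D i)) * Real.exp (t * Z D) := by
          have : 1 / W ≤ Real.exp u := by
            rw [Real.exp_neg] at hW
            rw [one_div]
            exact inv_le_of_inv_le₀ (Real.exp_pos _) hW
          refine mul_le_mul this ?_ ?_ (Real.exp_pos _).le
          · exact Finset.sum_le_sum_of_subset_of_nonneg (Finset.subset_univ _)
              fun D _ _ => mul_nonneg (hw D) (Real.exp_pos _).le
          · exact Finset.sum_nonneg fun D _ => mul_nonneg (hw D) (Real.exp_pos _).le
      _ ≤ _ := by gcongr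
  have h3 := J.trans h2
  rw [← Real.exp_add] at h3
  have h4 := Real.exp_le_exp.mp h3
  refine h4.trans (le_of_eq ?_)
  ring

lemma aux_key {X : Type*} [Fintype X] (p : X → ℝ) (hp : ∀ x, 0 ≤ p x) (hp1 : ∑ x, p x = 1)
    (σs : X → Bool) (F : Finset (X → Bool)) (hF : F.Nonempty) {k r : ℕ} (hk : 1 ≤ k)
    (B : Finset (Fin k ⊕ (Fin k ⊕ Fin r) → X))
    (hB : ∀ (π : Equiv.Perm (Fin k ⊕ (Fin k ⊕ Fin r))) D, D ∈ B → D ∘ π ∈ B)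
    (u : ℝ) (hW : Real.exp (-u) ≤ ∑ D ∈ B, ∏ i, p (D i))
    (T : (Fin k ⊕ (Fin k ⊕ Fin r) → X) → ℝ)
    (hT : ∀ D ∈ B, ∃ f ∈ F, T D ≤ risk p σs f -
      (1 / (Fintype.card (Fin k ⊕ (Fin k ⊕ Fin r)) : ℝ)) * ∑ i, auxLoss σs f (D i)) :
    ∑ D ∈ B, (∏ i, p (D i)) * T D ≤
      ∑ D ∈ B, (∏ i, p (D i)) * Real.sqrt (2 * Real.log (F.image (fun f => f ∘ D)).card / k)
      + (∑ D ∈ B, ∏ i, p (D i)) * Real.sqrt (u / (2 * (k + r : ℝ))) := by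
  have hk0 : (0:ℝ) < k := by exact_mod_cast hk
  have hw : ∀ D : Fin k ⊕ (Fin k ⊕ Fin r) → X, 0 ≤ ∏ i, p (D i) :=
    fun D => Finset.prod_nonneg fun i _ => hp _
  let q : (X → Bool) → (Fin k → X) → ℝ := fun f y =>
    risk p σs f - (1 / (k:ℝ)) * ∑ i, auxLoss σs f (y i)
  have hex : ∀ y : Fin k → X, ∃ f ∈ F, ∀ f' ∈ F, q f' y ≤ q f y :=
    fun y => Finset.exists_max_image F (fun f => q f y) hF
  choose fh hfh hmax using hex
  let Γ : (Fin k ⊕ (Fin k ⊕ Fin r) → X) → ℝ := fun D => q (fh (D ∘ Sum.inl)) (D ∘ Sum.inl)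
  -- step 1
  have S1 : ∑ D ∈ B, (∏ i, p (D i)) * T D ≤ ∑ D ∈ B, (∏ i, p (D i)) * Γ D := by
    set n : ℝ := ((Fintype.card (Equiv.Perm (Fin k ⊕ (Fin k ⊕ Fin r))) : ℕ) : ℝ) with hn
    have hn0 : 0 < n := by
      rw [hn]; exact_mod_cast Fintype.card_pos
    have h1 : ∀ D ∈ B, n * T D ≤ ∑ π : Equiv.Perm (Fin k ⊕ (Fin k ⊕ Fin r)), Γ (D ∘ π) := by
      intro D hD
      obtain ⟨f, hf, hle⟩ := hT D hD
      calc n * T D ≤ n * (risk p σs f - (1 / (Fintype.card (Fin k ⊕ (Fin k ⊕ Fin r)) : ℝ))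
              * ∑ i, auxLoss σs f (D i)) := by gcongr
        _ = ∑ π : Equiv.Perm (Fin k ⊕ (Fin k ⊕ Fin r)), q f ((D ∘ π) ∘ Sum.inl) := by
            simp only [q, Function.comp]
            rw [Finset.sum_sub_distrib, ← Finset.mul_sum, Finset.sum_comm]
            simp only [aux_perm (fun i => auxLoss σs f (D i))]
            rw [Finset.sum_const, Finset.sum_const, Finset.card_univ, Finset.card_univ,
              nsmul_eq_mul, nsmul_eq_mul, ← hn, Fintype.card_fin]
            field_simp
        _ ≤ _ := Finset.sum_le_sum fun π _ => hmax _ f hf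
    have h2 : n * ∑ D ∈ B, (∏ i, p (D i)) * T D ≤ n * ∑ D ∈ B, (∏ i, p (D i)) * Γ D := by
      calc n * ∑ D ∈ B, (∏ i, p (D i)) * T D = ∑ D ∈ B, (∏ i, p (D i)) * (n * T D) := by
            rw [Finset.mul_sum]; refine Finset.sum_congr rfl fun _ _ => by ring
        _ ≤ ∑ D ∈ B, (∏ i, p (D i)) * ∑ π : Equiv.Perm (Fin k ⊕ (Fin k ⊕ Fin r)), Γ (D ∘ π) :=
            Finset.sum_le_sum fun D hD => mul_le_mul_of_nonneg_left (h1 D hD) (hw D)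
        _ = ∑ π : Equiv.Perm (Fin k ⊕ (Fin k ⊕ Fin r)), ∑ D ∈ B, (∏ i, p (D i)) * Γ (D ∘ π) := by
            rw [Finset.sum_comm]; simp only [Finset.mul_sum]
        _ = _ := by
            simp only [aux_inv p B hB]
            rw [Finset.sum_const, Finset.card_univ, nsmul_eq_mul]
    exact le_of_mul_le_mul_left h2 hn0
  have S5 := aux_S5 (μ := Fin k ⊕ Fin r) (κ := Fin k) p hp hp1 (by simp; omega) σs B u hW fh
  have S4 := aux_S4 p hp σs F hF hk B hB (fun D => fh (D ∘ Sum.inl)) (fun D => hfh _)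
  -- step 3
  let V : Fin k ⊕ Fin r → ℝ := fun j =>
    ∑ D ∈ B, (∏ i, p (D i)) * auxLoss σs (fh (D ∘ Sum.inl)) (D (Sum.inr j))
  have hV : ∀ j j', V j = V j' := by
    intro j j'
    have := aux_inv p B hB (Equiv.swap (Sum.inr j) (Sum.inr j'))
      (fun D => auxLoss σs (fh (D ∘ Sum.inl)) (D (Sum.inr j')))
    simp only [V]
    rw [← this]
    refine Finset.sum_congr rfl fun D _ => ?_
    have e : (D ∘ (Equiv.swap (Sum.inr j) (Sum.inr j'))) ∘ Sum.inl = D ∘ Sum.inl := by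
      funext i
      simp [Equiv.swap_apply_of_ne_of_ne]
    rw [e]
    simp
  let j0 : Fin k ⊕ Fin r := Sum.inl ⟨0, hk⟩
  have a1 : ∑ D ∈ B, (∏ i, p (D i)) * ((1 / (Fintype.card (Fin k ⊕ Fin r) : ℝ)) *
      ∑ j, auxLoss σs (fh (D ∘ Sum.inl)) (D (Sum.inr j))) = V j0 := by
    have : ∑ j, V j = (Fintype.card (Fin k ⊕ Fin r) : ℝ) * V j0 := by
      rw [Finset.sum_congr rfl fun j _ => hV j j0]; simp
    have h0 : (Fintype.card (Fin k ⊕ Fin r) : ℝ) ≠ 0 := by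
      simp; positivity
    have e : V j0 = (1 / (Fintype.card (Fin k ⊕ Fin r) : ℝ)) * ∑ j, V j := by
      rw [this]; field_simp
    rw [e]
    simp only [V]
    rw [Finset.sum_comm, Finset.mul_sum]
    refine Finset.sum_congr rfl fun D _ => ?_
    rw [← Finset.mul_sum]; ring
  have a2 : ∑ D ∈ B, (∏ i, p (D i)) * ((1 / (k : ℝ)) *
      ∑ j, auxLoss σs (fh (D ∘ Sum.inl)) (D (Sum.inr (Sum.inl j)))) = V j0 := by
    have : ∑ j : Fin k, V (Sum.inl j) = (k : ℝ) * V j0 := by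
      rw [Finset.sum_congr rfl fun j _ => hV (Sum.inl j) j0]; simp
    have e : V j0 = (1 / (k : ℝ)) * ∑ j : Fin k, V (Sum.inl j) := by
      rw [this]; field_simp
    rw [e]
    simp only [V]
    rw [Finset.sum_comm, Finset.mul_sum]
    refine Finset.sum_congr rfl fun D _ => ?_
    rw [← Finset.mul_sum]; ring
  have hsplit : ∑ D ∈ B, (∏ i, p (D i)) * Γ D
      = ∑ D ∈ B, (∏ i, p (D i)) * (risk p σs (fh (D ∘ Sum.inl)) -
       (1 / (Fintype.card (Fin k ⊕ Fin r) : ℝ)) *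
          ∑ j, auxLoss σs (fh (D ∘ Sum.inl)) (D (Sum.inr j)))
       + ∑ D ∈ B, (∏ i, p (D i)) * ((1 / (k:ℝ)) *
          ∑ i, (auxLoss σs (fh (D ∘ Sum.inl)) (D (Sum.inr (Sum.inl i)))
          - auxLoss σs (fh (D ∘ Sum.inl)) (D (Sum.inl i)))) := by
    have b1 : ∀ D : Fin k ⊕ (Fin k ⊕ Fin r) → X, (∏ i, p (D i)) * ((1 / (k:ℝ)) *
          ∑ i, (auxLoss σs (fh (D ∘ Sum.inl)) (D (Sum.inr (Sum.inl i)))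
          - auxLoss σs (fh (D ∘ Sum.inl)) (D (Sum.inl i))))
        = (∏ i, p (D i)) * ((1 / (k : ℝ)) *
            ∑ j, auxLoss σs (fh (D ∘ Sum.inl)) (D (Sum.inr (Sum.inl j))))
          - (∏ i, p (D i)) * ((1 / (k : ℝ)) *
            ∑ j, auxLoss σs (fh (D ∘ Sum.inl)) (D (Sum.inl j))) := by
      intro D; rw [Finset.sum_sub_distrib]; ring
    rw [Finset.sum_congr rfl (fun D _ => b1 D)]
    simp only [mul_sub (∏ i, p _), Finset.sum_sub_distrib, Γ, q, a1, a2]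
    simp only [Function.comp]
    ring
  have hc : (Fintype.card (Fin k ⊕ Fin r) : ℝ) = k + r := by simp
  rw [hsplit] at S1
  rw [hc] at S5
  rw [hc] at S1
  linarith

lemma aux_ei {X : Type*} [Fintype X] {l : ℕ} (hl : 1 ≤ l)
    (F : Finset (X → Bool)) (hF : F.Nonempty) (D : Fin l → X) (hD : Function.Injective D) :
    Real.logb 2 (F.image (fun f => f ∘ D)).card / l ≤ 1 - ei (minRisk F hF D) 0 / l := by
  have hl0 : (0:ℝ) < l := by exact_mod_cast hl
  set S := F.image (fun f => f ∘ D) with hS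
  set E := Finset.univ.filter (fun a : X → Bool => minRisk F hF D a = 0) with hE
  have hzero : ∀ σ : X → Bool, σ ∘ D ∈ S → σ ∈ E := by
    intro σ hσ
    obtain ⟨f, hf, hfe⟩ := Finset.mem_image.mp hσ
    rw [hE, Finset.mem_filter]
    refine ⟨Finset.mem_univ _, ?_⟩
    have hnn : ∀ f : X → Bool, 0 ≤ empRisk f D (fun i => σ (D i)) := by
      intro f
      unfold empRisk
      refine mul_nonneg (by positivity) (Finset.sum_nonneg fun i _ => ?_)
      split_ifs <;> simp
    have h0 : empRisk f D (fun i => σ (D i)) = 0 := by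
      unfold empRisk
      have : ∀ i, f (D i) = σ (D i) := fun i => congrFun hfe i
      simp [this]
    unfold minRisk
    refine le_antisymm ?_ ?_
    · exact (Finset.inf'_le _ hf).trans h0.le
    · exact Finset.le_inf' _ _ fun f _ => hnn f
  have hcard : S.card * 2 ^ Fintype.card X ≤ E.card * 2 ^ l := by
    have h1 : (S ×ˢ (Finset.univ : Finset (X → Bool))).card
        ≤ (E ×ˢ (Finset.univ : Finset (Fin l → Bool))).card := by
      refine Finset.card_le_card_of_injOn
        (fun q => (Function.extend D q.1 q.2, q.2 ∘ D)) ?_ ?_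
      · rintro ⟨b, τ⟩ hb
        simp only [Finset.coe_product, Set.mem_prod, Finset.mem_coe] at hb
        simp only [Finset.coe_product, Set.mem_prod, Finset.mem_coe]
        refine ⟨hzero _ ?_, Finset.mem_univ _⟩
        rw [Function.extend_comp hD]
        exact hb.1
      · rintro ⟨b, τ⟩ _ ⟨b', τ'⟩ _ h
        simp only [Prod.mk.injEq] at h
        obtain ⟨h1, h2⟩ := h
        have hb : b = b' := by
          rw [← Function.extend_comp hD b τ, h1, Function.extend_comp hD]
        subst hb
        have : τ = τ' := by
          funext x
          by_cases hx : ∃ i, D i = x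
          · obtain ⟨i, rfl⟩ := hx
            exact congrFun h2 i
          · have := congrFun h1 x
            rwa [Function.extend_apply' _ _ _ hx, Function.extend_apply' _ _ _ hx] at this
        rw [this]
    rw [Finset.card_product, Finset.card_product] at h1
    simpa using h1
  have hSpos : 0 < S.card := (hF.image _).card_pos
  have hEpos : 0 < E.card := by
    by_contra h
    have : E.card = 0 := by omega
    rw [this] at hcard
    have : 0 < S.card * 2 ^ Fintype.card X := by positivity
    omega
  have hR : (S.card : ℝ) * 2 ^ Fintype.card X ≤ E.card * 2 ^ l := by exact_mod_cast hcard
  have hS0 : (0:ℝ) < S.card := by exact_mod_cast hSpos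
  have hE0 : (0:ℝ) < E.card := by exact_mod_cast hEpos
  have hlog := Real.logb_le_logb_of_le (b := 2) (by norm_num) (by positivity) hR
  have l2 : ∀ n : ℕ, Real.logb 2 ((2:ℝ) ^ n) = n := by
    intro n; rw [Real.logb_pow]; simp
  rw [Real.logb_mul hS0.ne' (by positivity), Real.logb_mul hE0.ne' (by positivity), l2, l2] at hlog
  have hei : ei (minRisk F hF D) 0 = (Fintype.card X : ℝ) - Real.logb 2 E.card := by
    unfold ei
    rw [← l2 (Fintype.card X), hE]
    congr 2
    · simp
  rw [hei]
  have : 1 - ((Fintype.card X : ℝ) - Real.logb 2 E.card) / l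
      = (l - Fintype.card X + Real.logb 2 E.card) / l := by field_simp; ring
  rw [this]
  gcongr
  linarith

lemma aux_emp {X : Type*} {l : ℕ} (σs f : X → Bool) (D : Fin l → X) :
    empRisk f D (fun i => σs (D i)) = (1 / l : ℝ) * ∑ i, auxLoss σs f (D i) := rfl

lemma aux_image_card {X ι κ : Type*} [Fintype ι] [Fintype κ] (F : Finset (X → Bool))
    (D : ι → X) (e : κ ≃ ι) :
    (F.image (fun f => f ∘ (D ∘ e))).card = (F.image (fun f => f ∘ D)).card := by
  have : F.image (fun f => f ∘ (D ∘ e)) = (F.image (fun f => f ∘ D)).image (fun b => b ∘ e) := by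
    rw [Finset.image_image]; rfl
  rw [this]
  apply Finset.card_image_of_injective
  intro a b h
  exact e.surjective.injective_comp_right h

/-- the bad event, for a general index type -/
noncomputable def auxBad {X : Type*} [Fintype X] (p : X → ℝ) (σs : X → Bool)
    (F : Finset (X → Bool)) (u : ℝ) (ι : Type) [Fintype ι] [DecidableEq ι] : Finset (ι → X) :=
  Finset.univ.filter (fun D => ∃ f ∈ F,
    Real.sqrt (6 * Real.log (F.image (fun f => f ∘ D)).card / Fintype.card ι)
      + Real.sqrt (u / Fintype.card ι)
      < risk p σs f - (1 / (Fintype.card ι : ℝ)) * ∑ i, auxLoss σs f (D i))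

lemma auxBad_comp {X : Type*} [Fintype X] (p : X → ℝ) (σs : X → Bool)
    (F : Finset (X → Bool)) (u : ℝ) {ι κ : Type} [Fintype ι] [DecidableEq ι] [Fintype κ]
    [DecidableEq κ] (e : κ ≃ ι) (D : ι → X) (hD : D ∈ auxBad p σs F u ι) :
    D ∘ e ∈ auxBad p σs F u κ := by
  simp only [auxBad, Finset.mem_filter, Finset.mem_univ, true_and] at hD ⊢
  obtain ⟨f, hf, h⟩ := hD
  refine ⟨f, hf, ?_⟩
  have h1 := aux_image_card F D e
  have h2 : ∑ i, auxLoss σs f ((D ∘ e) i) = ∑ i, auxLoss σs f (D i) :=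
    Equiv.sum_comp e (fun i => auxLoss σs f (D i))
  rw [h2, Fintype.card_congr e]
  convert h using 6
  rw [Nat.cast_inj]
  convert h1

lemma auxBad_mass {X : Type*} [Fintype X] (p : X → ℝ) (σs : X → Bool)
    (F : Finset (X → Bool)) (u : ℝ) {ι κ : Type} [Fintype ι] [DecidableEq ι] [Fintype κ]
    [DecidableEq κ] (e : κ ≃ ι) :
    ∑ D ∈ auxBad p σs F u ι, ∏ i, p (D i) = ∑ D ∈ auxBad p σs F u κ, ∏ i, p (D i) := by
  refine Finset.sum_nbij' (fun D => D ∘ e) (fun D => D ∘ e.symm)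
    (fun D h => auxBad_comp p σs F u e D h)
    (fun D h => auxBad_comp p σs F u e.symm D h) (fun D _ => ?_) (fun D _ => ?_) (fun D _ => ?_)
  · funext i; simp
  · funext i; simp
  · exact (Equiv.prod_comp e (fun i => p (D i))).symm

lemma aux_main {X : Type*} [Fintype X] (p : X → ℝ) (hp : ∀ x, 0 ≤ p x) (hp1 : ∑ x, p x = 1)
    (σs : X → Bool) (F : Finset (X → Bool)) (hF : F.Nonempty) {k r : ℕ} (hk : 1 ≤ k)
    (hr : k + r ≤ 2 * k) (u : ℝ) (hu : 0 ≤ u) :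
    ∑ D ∈ auxBad p σs F u (Fin k ⊕ (Fin k ⊕ Fin r)), ∏ i, p (D i) ≤ Real.exp (-u) := by
  by_contra hcon
  push Not at hcon
  set B := auxBad p σs F u (Fin k ⊕ (Fin k ⊕ Fin r)) with hBd
  have hk0 : (0:ℝ) < k := by exact_mod_cast hk
  have hw : ∀ D : Fin k ⊕ (Fin k ⊕ Fin r) → X, 0 ≤ ∏ i, p (D i) :=
    fun D => Finset.prod_nonneg fun i _ => hp _
  have hex : ∀ D, ∃ T : ℝ, D ∈ B → (Real.sqrt (6 * Real.log (F.image (fun f => f ∘ D)).card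
      / Fintype.card (Fin k ⊕ (Fin k ⊕ Fin r)))
      + Real.sqrt (u / Fintype.card (Fin k ⊕ (Fin k ⊕ Fin r))) < T) ∧
      ∃ f ∈ F, T ≤ risk p σs f -
      (1 / (Fintype.card (Fin k ⊕ (Fin k ⊕ Fin r)) : ℝ)) * ∑ i, auxLoss σs f (D i) := by
    intro D
    by_cases hD : D ∈ B
    · have hD' := hD
      rw [hBd] at hD'
      simp only [auxBad, Finset.mem_filter, Finset.mem_univ, true_and] at hD'
      obtain ⟨f, hf, h⟩ := hD'
      exact ⟨_, fun _ => ⟨h, f, hf, le_rfl⟩⟩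
    · exact ⟨0, fun h => absurd h hD⟩
  choose T hT using hex
  have key := aux_key p hp hp1 σs F hF hk B (fun π D h => auxBad_comp p σs F u π D h) u hcon.le T
    (fun D hD => (hT D hD).2)
  have hc : (Fintype.card (Fin k ⊕ (Fin k ⊕ Fin r)) : ℝ) = k + (k + r) := by simp
  have hr' : (r:ℝ) ≤ k := by
    have : r ≤ k := by omega
    exact_mod_cast this
  have hlt : ∑ D ∈ B, (∏ i, p (D i)) *
      (Real.sqrt (2 * Real.log (F.image (fun f => f ∘ D)).card / k)
        + Real.sqrt (u / (2 * (k + r : ℝ)))) < ∑ D ∈ B, (∏ i, p (D i)) * T D := by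
    have hbd : ∀ D ∈ B, Real.sqrt (2 * Real.log (F.image (fun f => f ∘ D)).card / k)
        + Real.sqrt (u / (2 * (k + r : ℝ))) < T D := by
      intro D hD
      refine lt_of_le_of_lt ?_ (hT D hD).1
      rw [hc]
      have hlog : 0 ≤ Real.log (F.image (fun f => f ∘ D)).card := Real.log_natCast_nonneg _
      refine add_le_add (Real.sqrt_le_sqrt ?_) (Real.sqrt_le_sqrt ?_)
      · rw [div_le_div_iff₀ hk0 (by positivity)]
        nlinarith
      · apply div_le_div_of_nonneg_left hu (by positivity)
        have : (0:ℝ) ≤ r := by positivity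
        linarith
    refine Finset.sum_lt_sum
      (fun D hD => mul_le_mul_of_nonneg_left (hbd D hD).le (hw D)) ?_
    have hpos : 0 < ∑ D ∈ B, ∏ i, p (D i) := (Real.exp_pos _).trans hcon
    obtain ⟨D, hD, hD0⟩ := Finset.exists_lt_of_sum_lt (s := B) (f := fun _ => (0:ℝ))
      (g := fun D => ∏ i, p (D i)) (by simpa using hpos)
    exact ⟨D, hD, mul_lt_mul_of_pos_left (hbd D hD) hD0⟩
  simp only [mul_add (∏ i, p _), Finset.sum_add_distrib, ← Finset.sum_mul] at hlt
  linarith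

lemma aux_one {X : Type*} [Fintype X] (p : X → ℝ) (hp : ∀ x, 0 ≤ p x) (hp1 : ∑ x, p x = 1)
    (σs : X → Bool) (F : Finset (X → Bool)) (hF : F.Nonempty) (u : ℝ) (hu : 0 ≤ u) :
    ∑ D ∈ auxBad p σs F u (Fin 1), ∏ i, p (D i) ≤ Real.exp (-u) := by
  have hR1 : ∀ f, risk p σs f ≤ 1 := by
    intro f
    rw [← hp1]
    unfold risk
    refine Finset.sum_le_sum fun x _ => ?_
    have := hp x
    split_ifs <;> linarith
  obtain ⟨g, hg, hmax⟩ := Finset.exists_max_image F (risk p σs) hF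
  have hbad : ∀ D ∈ auxBad p σs F u (Fin 1), Real.sqrt u < risk p σs g ∧ g (D 0) = σs (D 0) := by
    intro D hD
    simp only [auxBad, Finset.mem_filter, Finset.mem_univ, true_and] at hD
    obtain ⟨f, hf, h⟩ := hD
    simp only [Fintype.card_fin, Nat.cast_one, div_one, Finset.univ_unique, Finset.sum_singleton,
      one_mul, Fin.default_eq_zero] at h
    have hsu := Real.sqrt_nonneg u
    have hloss := auxLoss_mem σs f (D 0)
    have hfg : f ∘ D = g ∘ D := by
      by_contra hne
      have h2 : 2 ≤ (F.image (fun f => f ∘ D)).card := by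
        apply Finset.one_lt_card.mpr
        exact ⟨f ∘ D, Finset.mem_image_of_mem _ hf, g ∘ D, Finset.mem_image_of_mem _ hg, hne⟩
      have h3 : (2:ℝ) ≤ (F.image (fun f => f ∘ D)).card := by exact_mod_cast h2
      have h4 := Real.log_le_log (by norm_num) h3
      have h5 := Real.log_two_gt_d9
      have h6 : 1 ≤ Real.sqrt (6 * Real.log (F.image (fun f => f ∘ D)).card) := by
        apply Real.le_sqrt_of_sq_le; linarith
      have := hR1 f
      linarith [hloss.1]
    have hsq := Real.sqrt_nonneg (6 * Real.log (F.image (fun f => f ∘ D)).card)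
    refine ⟨by linarith [hmax f hf, hloss.1], ?_⟩
    have : g (D 0) = f (D 0) := (congrFun hfg 0).symm
    rw [this]
    by_contra hne
    have : auxLoss σs f (D 0) = 1 := by simp [auxLoss, hne]
    linarith [hR1 f]
  rcases (auxBad p σs F u (Fin 1)).eq_empty_or_nonempty with he | ⟨D0, hD0⟩
  · rw [he]; simp [(Real.exp_pos _).le]
  have hsu := (hbad D0 hD0).1
  have hsum : ∑ D ∈ auxBad p σs F u (Fin 1), ∏ i, p (D i) ≤ 1 - risk p σs g := by
    calc ∑ D ∈ auxBad p σs F u (Fin 1), ∏ i, p (D i)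
        ≤ ∑ D : Fin 1 → X, (1 - auxLoss σs g (D 0)) * p (D 0) := by
          refine (Finset.sum_le_sum fun D hD => ?_).trans
            (Finset.sum_le_sum_of_subset_of_nonneg (Finset.subset_univ _) fun D _ _ =>
              mul_nonneg (by linarith [(auxLoss_mem σs g (D 0)).2]) (hp _))
          simp [auxLoss, (hbad D hD).2]
      _ = ∑ x, (1 - auxLoss σs g x) * p x :=
          (Equiv.sum_comp (Equiv.funUnique (Fin 1) X) (fun x => (1 - auxLoss σs g x) * p x))
      _ = 1 - risk p σs g := by
          simp only [sub_mul, one_mul, Finset.sum_sub_distrib, hp1]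
          rfl
  have hs1 : Real.sqrt u < 1 := hsu.trans_le (hR1 g)
  have h2 := Real.sq_sqrt hu
  have h3 := Real.sqrt_nonneg u
  have := Real.add_one_le_exp (-u)
  nlinarith

/-- Information-theoretic empirical VC bound: with probability at least `1 - δ`
over the i.i.d. draw of `D` from `p`, if the entries of `D` are pairwise
distinct then every `f ∈ F` satisfies
`R(f) ≤ R(f,D,L) + c₁√(1 - ei(𝐑_{F,D},0)/l) + c₂√((1 - log₂ δ)/l)`,
with `c₁ = √(6 ln 2)` and `c₂ = √(ln 2)`. -/
theorem information_theoretic_empirical_vc_bound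
    {X : Type*} [Fintype X] [Nonempty X]
    (p : X → ℝ) (hp : ∀ x, 0 ≤ p x) (hp1 : ∑ x, p x = 1)
    (σs : X → Bool) {l : ℕ} (hl : 1 ≤ l)
    (F : Finset (X → Bool)) (hF : F.Nonempty)
    (δ : ℝ) (hδ0 : 0 < δ) (hδ1 : δ < 1) :
    1 - δ ≤ ∑ D : Fin l → X,
      if (Function.Injective D → ∀ f ∈ F,
          risk p σs f ≤ empRisk f D (fun i => σs (D i))
            + Real.sqrt (6 * Real.log 2)
              * Real.sqrt (1 - ei (minRisk F hF D) 0 / l)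
            + Real.sqrt (Real.log 2) * Real.sqrt ((1 - Real.logb 2 δ) / l))
        then ∏ i, p (D i) else 0 := by
  set u : ℝ := Real.log 2 - Real.log δ with hu
  have hln2 : 0 < Real.log 2 := Real.log_pos (by norm_num)
  have hlδ : Real.log δ < 0 := Real.log_neg hδ0 hδ1
  have hu0 : 0 ≤ u := by linarith
  have hl0 : (0:ℝ) < l := by exact_mod_cast hl
  have hexp : Real.exp (-u) ≤ δ := by
    have : Real.exp (-u) ≤ Real.exp (Real.log δ) := Real.exp_le_exp.mpr (by linarith)
    rwa [Real.exp_log hδ0] at this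
  have hmass : ∑ D ∈ auxBad p σs F u (Fin l), ∏ i, p (D i) ≤ δ := by
    refine le_trans ?_ hexp
    rcases Nat.lt_or_ge 1 l with h | h
    · obtain ⟨k, r, hk, hr, hkr⟩ : ∃ k r, 1 ≤ k ∧ k + r ≤ 2 * k ∧ l = k + (k + r) :=
        ⟨l / 2, l % 2, by omega, by omega, by omega⟩
      have e : Fin k ⊕ (Fin k ⊕ Fin r) ≃ Fin l := Fintype.equivOfCardEq (by simp [hkr])
      rw [auxBad_mass p σs F u e]
      exact aux_main p hp hp1 σs F hF hk hr u hu0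
    · obtain rfl : l = 1 := by omega
      exact aux_one p hp hp1 σs F hF u hu0
  have htot : ∑ D : Fin l → X, ∏ i, p (D i) = 1 := by
    rw [← Fintype.piFinset_univ, ← Finset.prod_univ_sum (fun _ => univ) (fun _ x => p x)]
    simp [hp1]
  have hw : ∀ D : Fin l → X, 0 ≤ ∏ i, p (D i) :=
    fun D => Finset.prod_nonneg fun i _ => hp _
  have hsplit : ∑ D ∈ auxBad p σs F u (Fin l), ∏ i, p (D i)
      = ∑ D : Fin l → X, if D ∈ auxBad p σs F u (Fin l) then ∏ i, p (D i) else 0 := by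
    rw [← Finset.sum_filter]; congr 1; ext D; simp
  rw [hsplit] at hmass
  have hcomb : 1 - δ ≤ ∑ D : Fin l → X,
      ((∏ i, p (D i)) - if D ∈ auxBad p σs F u (Fin l) then ∏ i, p (D i) else 0) := by
    rw [Finset.sum_sub_distrib, htot]; linarith
  refine hcomb.trans (Finset.sum_le_sum fun D _ => ?_)
  by_cases hD : D ∈ auxBad p σs F u (Fin l)
  · rw [if_pos hD, sub_self]
    split_ifs
    · exact hw D
    · exact le_rfl
  · rw [if_neg hD, sub_zero, if_pos]
    intro hinj f hf
    simp only [auxBad, Finset.mem_filter, Finset.mem_univ, true_and, not_exists, not_and,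
      not_lt] at hD
    have h1 := hD f hf
    rw [Fintype.card_fin] at h1
    rw [aux_emp]
    have h2 : Real.sqrt (6 * Real.log (F.image (fun f => f ∘ D)).card / l)
        ≤ Real.sqrt (6 * Real.log 2) * Real.sqrt (1 - ei (minRisk F hF D) 0 / l) := by
      rw [← Real.sqrt_mul (by positivity)]
      apply Real.sqrt_le_sqrt
      have h3 := aux_ei hl F hF D hinj
      calc 6 * Real.log (F.image (fun f => f ∘ D)).card / l
          = 6 * Real.log 2 * (Real.logb 2 (F.image (fun f => f ∘ D)).card / l) := by
            rw [Real.logb]; field_simp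
        _ ≤ _ := by gcongr
    have h4 : Real.sqrt (Real.log 2) * Real.sqrt ((1 - Real.logb 2 δ) / l) = Real.sqrt (u / l) := by
      rw [← Real.sqrt_mul hln2.le]
      congr 1
      rw [Real.logb, hu]; field_simp
    rw [h4]
    linarith
end

section
/- Let σ̂ ∈ Σ be any hypothesis with 𝐑_{F,D}(σ̂) = 0 (a 'true hypothesis' fit perfectly by the repertoire). Then the message length of σ̂ in the optimal code for the actual repertoire specified by the min-risk outputting 0 satisfies len(σ̂) := −log₂ p_𝔪(σ̂ | ε = 0) = V(F,D) + (|X| − l). -/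
open Classical Finset

/-- The actual repertoire specified by the min-risk outputting `ε`: the uniform
distribution on the preimage `𝐑_{F,D}⁻¹(ε)`. -/
noncomputable def actualRep {X : Type*} [Fintype X] {l : ℕ}
    (F : Finset (X → Bool)) (hF : F.Nonempty) (D : Fin l → X) (ε : ℝ)
    (σ : X → Bool) : ℝ :=
  if minRisk F hF D σ = ε then
    1 / ((Finset.univ.filter (fun τ : X → Bool => minRisk F hF D τ = ε)).card : ℝ)
  else 0

lemma minRisk_eq_zero_iff {X : Type*} {l : ℕ} (hl : 1 ≤ l)
    (F : Finset (X → Bool)) (hF : F.Nonempty) (D : Fin l → X) (τ : X → Bool) :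
    minRisk F hF D τ = 0 ↔ (fun i => τ (D i)) ∈ F.image (fun f => fun i => f (D i)) := by
  have hl' : (0 : ℝ) < 1 / l := by
    have : (0 : ℝ) < l := by exact_mod_cast hl
    positivity
  have hnn : ∀ f : X → Bool, 0 ≤ empRisk f D (fun i => τ (D i)) := by
    intro f
    unfold empRisk
    refine mul_nonneg hl'.le (Finset.sum_nonneg fun i _ => ?_)
    split_ifs <;> norm_num
  have hz : ∀ f : X → Bool, empRisk f D (fun i => τ (D i)) = 0 ↔ ∀ i, f (D i) = τ (D i) := by
    intro f
    unfold empRisk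
    rw [mul_eq_zero, or_iff_right hl'.ne', Finset.sum_eq_zero_iff_of_nonneg]
    · simp
    · intro i _
      split_ifs <;> norm_num
  rw [Finset.mem_image]
  constructor
  · intro h
    obtain ⟨f, hf, he⟩ := Finset.exists_mem_eq_inf' hF
      (fun f => empRisk f D (fun i => τ (D i)))
    refine ⟨f, hf, funext ((hz f).1 ?_)⟩
    rw [← he]
    exact h
  · rintro ⟨f, hf, he⟩
    apply le_antisymm
    · have h0 := (hz f).2 (fun i => congrFun he i)
      rw [← h0]
      exact Finset.inf'_le (fun f => empRisk f D (fun i => τ (D i))) hf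
    · exact Finset.le_inf' _ _ (fun f _ => hnn f)

lemma card_restrict {X : Type*} [Fintype X] {l : ℕ} (D : Fin l → X)
    (hD : Function.Injective D) (S : Finset (Fin l → Bool)) :
    (Finset.univ.filter (fun τ : X → Bool => (fun i => τ (D i)) ∈ S)).card
      = S.card * 2 ^ (Fintype.card X - l) := by
  let e : (X → Bool) ≃ (Fin l → Bool) × ({x // ¬ x ∈ Set.range D} → Bool) :=
    (Equiv.piEquivPiSubtypeProd (fun x => x ∈ Set.range D) (fun _ => Bool)).trans
      (Equiv.prodCongr ((Equiv.ofInjective D hD).symm.arrowCongr (Equiv.refl Bool))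
        (Equiv.refl _))
  have he : ∀ τ, (e τ).1 = fun i => τ (D i) := fun τ => rfl
  have hc : (Finset.univ.filter (fun τ : X → Bool => (fun i => τ (D i)) ∈ S)).card
      = (S ×ˢ (Finset.univ : Finset ({x // ¬ x ∈ Set.range D} → Bool))).card := by
    refine Finset.card_equiv e (fun τ => ?_)
    simp [Finset.mem_product, he]
  have h1 : Fintype.card {x // x ∈ Set.range D} = l := by
    rw [← Fintype.card_congr (Equiv.ofInjective D hD), Fintype.card_fin]
  rw [hc, Finset.card_product, Finset.card_univ, Fintype.card_fun, Fintype.card_bool,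
    Fintype.card_subtype_compl, h1]

/-- VC-entropy controls the code length of the true hypothesis: for any `σ̂`
fit perfectly by the repertoire, its message length in the optimal code for
the actual repertoire `p_𝔪(·|ε=0)` is `V(F,D) + (|X| - l)`. -/
theorem codeLength_true_hypothesis
    {X : Type*} [Fintype X] [Nonempty X] {l : ℕ} (hl : 1 ≤ l)
    (F : Finset (X → Bool)) (hF : F.Nonempty)
    (D : Fin l → X) (hD : Function.Injective D)
    (σhat : X → Bool) (hσ : minRisk F hF D σhat = 0) :
    -Real.logb 2 (actualRep F hF D 0 σhat)
      = vcEntropy F D + ((Fintype.card X : ℝ) - (l : ℝ)) := by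
  have hlX : l ≤ Fintype.card X := by
    simpa using Fintype.card_le_of_injective D hD
  have hS : 0 < (F.image (fun f => fun i => f (D i))).card :=
    Finset.card_pos.2 (hF.image _)
  unfold actualRep vcEntropy
  rw [if_pos hσ]
  simp only [minRisk_eq_zero_iff hl]
  rw [card_restrict D hD, one_div, Real.logb_inv, neg_neg]
  push_cast
  rw [Real.logb_mul (by exact_mod_cast hS.ne') (by positivity), Real.logb_pow,
    Real.logb_self_eq_one (by norm_num), Nat.cast_sub hlX, mul_one]
end
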